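/- Let P be any one of the conjugacy-invariant sets SS(x), SSS(x), USS(x), RSSS(x). If y ∈ P and a, b are permutation braids with a^{-1}ya ∈ P and b^{-1}yb ∈ P, then (a∧b)^{-1} y (a∧b) ∈ P, where ∧ is the left meet of permutation braids. Consequently, for each y ∈ P there is a unique minimal permutation braid a (with respect to left divisibility) such that a^{-1}ya ∈ P. -/

import Mathlib

/-! Basic definitions for the braid group `B_n`, its Garside structure,
and related notions, following Garside/El-Rifai–Morton.
Generators are indexed by `i : Fin (n-1)`, with `σ i` corresponding to the
Artin generator `σ_{i+1}` (1-based) of the paper. -/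

/-- The braid relations, as a set of elements of the free group. -/
def braidRels (n : ℕ) : Set (FreeGroup (Fin (n - 1))) :=
  { r | (∃ i j : Fin (n - 1), (i : ℕ) + 1 < (j : ℕ) ∧
          r = .of i * .of j * (.of i)⁻¹ * (.of j)⁻¹) ∨
        (∃ i j : Fin (n - 1), (i : ℕ) + 1 = (j : ℕ) ∧
          r = (.of i * .of j * .of i) * (.of j * .of i * .of j)⁻¹) }

/-- The braid group on `n` strands. -/
abbrev BraidGroup (n : ℕ) := PresentedGroup (braidRels n)

namespace BraidGroup

variable {n : ℕ}

/-- The Artin generator `σ_{i+1}` (`i` is a 0-based index). -/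
def σ (i : Fin (n - 1)) : BraidGroup n := PresentedGroup.of i

/-- `σ'` with a natural-number 0-based index (junk value `1` out of range). -/
def σ' (n : ℕ) (i : ℕ) : BraidGroup n := if h : i < n - 1 then σ ⟨i, h⟩ else 1

/-- The fundamental braid `Δ = (σ_1⋯σ_{n-1})(σ_1⋯σ_{n-2})⋯(σ_1σ_2)σ_1`. -/
def Δ (n : ℕ) : BraidGroup n :=
  (((List.range (n - 1)).reverse).map
    (fun j => ((List.range (j + 1)).map (σ' n)).prod)).prod

/-- The monoid of positive braids inside `B_n` (the image of `B_n^+`). -/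
def positives (n : ℕ) : Submonoid (BraidGroup n) :=
  Submonoid.closure (Set.range (σ (n := n)))

/-- `x` is a positive braid. -/
def IsPositive (x : BraidGroup n) : Prop := x ∈ positives n

/-- The prefix (left-divisibility) order: `x ≼ y` iff `x⁻¹y` is positive. -/
def LeftDvd (x y : BraidGroup n) : Prop := ∃ p, IsPositive p ∧ x * p = y

/-- The right-divisibility order: `x ≼_R y` iff `y x⁻¹` is positive. -/
def RightDvd (x y : BraidGroup n) : Prop := ∃ p, IsPositive p ∧ p * x = y

/-- Permutation braids: positive left divisors of `Δ`. -/
def IsPermBraid (x : BraidGroup n) : Prop := IsPositive x ∧ LeftDvd x (Δ n)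

/-- The involution `τ` of `B_n`, determined by `τ(σ_i) = σ_{n-i}`
(on 0-based indices: `i ↦ (n-2) - i`, i.e. `Fin.rev`). -/
noncomputable def τ (n : ℕ) : BraidGroup n →* BraidGroup n :=
  Classical.epsilon (fun f => ∀ i : Fin (n - 1), f (σ i) = σ i.rev)

/-- `τ^u` for an integer `u`: equals `τ` for odd `u` and the identity for even `u`
(`τ` is an involution). -/
noncomputable def τpow (u : ℤ) (x : BraidGroup n) : BraidGroup n :=
  if Even u then x else τ n x

/-- The product `a⬝b` of a permutation braid `a` and a positive braid `b` is left
weighted iff `a* ∧ b = e`, i.e. no generator left-divides both `a* = a⁻¹Δ` and `b`. -/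
def IsLeftWeighted (a b : BraidGroup n) : Prop :=
  ∀ i : Fin (n - 1), ¬ (LeftDvd (σ i) (a⁻¹ * Δ n) ∧ LeftDvd (σ i) b)

/-- `Δ^u x_1 ⋯ x_k` is the left weighted form of `x`, where `L = [x_1, …, x_k]`. -/
def IsWeightedForm (u : ℤ) (L : List (BraidGroup n)) (x : BraidGroup n) : Prop :=
  (∀ a ∈ L, IsPermBraid a ∧ a ≠ 1 ∧ a ≠ Δ n) ∧
  L.Chain' IsLeftWeighted ∧
  x = (Δ n) ^ u * L.prod

/-- The left weighted form of a braid (chosen by choice; it exists and is unique). -/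
noncomputable def wf (x : BraidGroup n) : ℤ × List (BraidGroup n) :=
  Classical.epsilon (fun p => IsWeightedForm p.1 p.2 x)

/-- The infimum `inf(x)`. -/
noncomputable def binf (x : BraidGroup n) : ℤ := (wf x).1

/-- The canonical length `ℓ(x)`. -/
noncomputable def blen (x : BraidGroup n) : ℕ := (wf x).2.length

/-- The supremum `sup(x) = inf(x) + ℓ(x)`. -/
noncomputable def bsup (x : BraidGroup n) : ℤ := binf x + blen x

/-- The head `H(x)`: the first factor of the weighted form. -/
noncomputable def bhead (x : BraidGroup n) : BraidGroup n := ((wf x).2.head?).getD 1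

/-- The tail `T(x)`: the last factor of the weighted form. -/
noncomputable def btail (x : BraidGroup n) : BraidGroup n := ((wf x).2.getLast?).getD 1

/-- Cycling: `c(x) = τ^u(H(x))⁻¹ · x · τ^u(H(x))`. -/
noncomputable def cyc (x : BraidGroup n) : BraidGroup n :=
  (τpow (binf x) (bhead x))⁻¹ * x * τpow (binf x) (bhead x)

/-- Decycling: `d(x) = T(x) · x · T(x)⁻¹`. -/
noncomputable def decyc (x : BraidGroup n) : BraidGroup n :=
  btail x * x * (btail x)⁻¹

/-- `x` is cyclically weighted: `x_k ⬝ τ^u(x_1)` is left weighted. -/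
noncomputable def IsCW (x : BraidGroup n) : Prop :=
  IsLeftWeighted (btail x) (τpow (binf x) (bhead x))

/-- `x` is weakly cyclically weighted: `H(x·τ^u(H(x))) = H(x)`. -/
noncomputable def IsWCW (x : BraidGroup n) : Prop :=
  bhead (x * τpow (binf x) (bhead x)) = bhead x

/-- The summit set of `x`: conjugates with maximal infimum. -/
def SS (x : BraidGroup n) : Set (BraidGroup n) :=
  { y | IsConj x y ∧ ∀ z, IsConj x z → binf z ≤ binf y }

/-- The super summit set of `x`: conjugates with maximal infimum and minimal supremum. -/
def SSS (x : BraidGroup n) : Set (BraidGroup n) :=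
  { y | y ∈ SS x ∧ ∀ z, IsConj x z → bsup y ≤ bsup z }

/-- The ultra summit set of `x`. -/
def USS (x : BraidGroup n) : Set (BraidGroup n) :=
  { y ∈ SSS x | ∃ M : ℕ, 0 < M ∧ cyc^[M] y = y }

/-- The reduced super summit set of `x`. -/
def RSSS (x : BraidGroup n) : Set (BraidGroup n) :=
  { y | IsConj x y ∧ (∃ M : ℕ, 0 < M ∧ cyc^[M] y = y) ∧
        (∃ N : ℕ, 0 < N ∧ decyc^[N] y = y) }

/-- The left meet (greatest common left divisor) of two braids. -/
noncomputable def leftMeet (a b : BraidGroup n) : BraidGroup n :=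
  Classical.epsilon (fun m => IsPositive m ∧ LeftDvd m a ∧ LeftDvd m b ∧
    ∀ c, IsPositive c → LeftDvd c a → LeftDvd c b → LeftDvd c m)

/-- `x` is periodic: some positive power of `x` is a power of `Δ²`. -/
def IsPeriodic (x : BraidGroup n) : Prop :=
  ∃ m : ℕ, 0 < m ∧ ∃ k : ℤ, x ^ m = (Δ n) ^ (2 * k)

/-- The free generator `x_{i+1}` of `π₁` of the `n`-punctured disk (0-based index;
junk value `1` out of range). -/
def freeGen (n : ℕ) (i : ℕ) : FreeGroup (Fin n) := if h : i < n then .of ⟨i, h⟩ else 1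

/-- The Artin action of `B_n` on the free group `F_n`:
`σ_i` sends `x_i ↦ x_i x_{i+1} x_i⁻¹`, `x_{i+1} ↦ x_i`, fixing the other generators. -/
noncomputable def artin (n : ℕ) : BraidGroup n →* Monoid.End (FreeGroup (Fin n)) :=
  Classical.epsilon (fun f => ∀ i : Fin (n - 1),
    f (σ i) = FreeGroup.lift (fun j : Fin n =>
      if (j : ℕ) = (i : ℕ) then freeGen n i * freeGen n (i + 1) * (freeGen n i)⁻¹
      else if (j : ℕ) = (i : ℕ) + 1 then freeGen n i
      else FreeGroup.of j))

/-- The element of `π₁` represented by the round curve enclosing punctures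
`I.1 + 1, …, I.2` (1-based): the product `x_{I.1+1} ⋯ x_{I.2}`. -/
def curveWord (n : ℕ) (I : ℕ × ℕ) : FreeGroup (Fin n) :=
  ((List.range (I.2 - I.1)).map (fun t => freeGen n (I.1 + t))).prod

/-- An essential round curve: it encloses at least `2` and at most `n-1` punctures. -/
def EssentialCurve (n : ℕ) (I : ℕ × ℕ) : Prop :=
  I.1 + 2 ≤ I.2 ∧ I.2 ≤ n ∧ I.2 - I.1 ≤ n - 1

/-- Two round curves are disjoint (as curves): the intervals are disjoint or nested. -/
def CurvesCompatible (I J : ℕ × ℕ) : Prop :=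
  I.2 ≤ J.1 ∨ J.2 ≤ I.1 ∨ (I.1 ≤ J.1 ∧ J.2 ≤ I.2) ∨ (J.1 ≤ I.1 ∧ I.2 ≤ J.2)

/-- `x` is reducible: some conjugate of `x` preserves, up to conjugacy in `π₁`
(i.e. up to isotopy) and orientation, a nonempty system of disjoint essential
round curves. -/
noncomputable def IsReducible (x : BraidGroup n) : Prop :=
  ∃ y, IsConj x y ∧ ∃ F : Finset (ℕ × ℕ), F.Nonempty ∧
    (∀ I ∈ F, EssentialCurve n I) ∧
    (∀ I ∈ F, ∀ J ∈ F, I ≠ J → CurvesCompatible I J) ∧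
    (∀ I ∈ F, ∃ J ∈ F, ∃ g : FreeGroup (Fin n),
      artin n y (curveWord n I) = g * curveWord n J * g⁻¹ ∨
      artin n y (curveWord n I) = g * (curveWord n J)⁻¹ * g⁻¹)

/-- `x` is pseudo-Anosov: neither periodic nor reducible (Nielsen–Thurston). -/
noncomputable def IsPseudoAnosov (x : BraidGroup n) : Prop :=
  ¬ IsPeriodic x ∧ ¬ IsReducible x

/-- `σ_i` (1-based index `i`) left-divides the positive braid `w`, i.e. `i` is
 a descent of `w`. -/
def HasDescent (n : ℕ) (i : ℕ) (w : BraidGroup n) : Prop := LeftDvd (σ' n (i - 1)) w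

/-- `D(n,k,i)`: the probability that a product of `k` independent uniformly random
permutation braids begins with the descent `i` (1-based), computed by counting. -/
noncomputable def descentProb (n k : ℕ) (i : ℕ) : ℝ :=
  ({ f : Fin k → BraidGroup n | (∀ j, IsPermBraid (f j)) ∧
      HasDescent n i (List.ofFn f).prod }.ncard : ℝ) / (n.factorial ^ k : ℝ)

/-- `D(n,k)`: the expected number of descents of a product of `k` random
permutation braids. -/
noncomputable def descentExp (n k : ℕ) : ℝ :=
  ∑ i ∈ Finset.Icc 1 (n - 1), descentProb n k i

/-- `d(n,k) = D(n,k) - D(n,k-1)`: the expected number of descents contributed by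
the `k`-th factor. -/
noncomputable def descentInc (n k : ℕ) : ℝ := descentExp n k - descentExp n (k - 1)

end BraidGroup

/-!
Garside's lemma, proved for simply laced Artin monoids of triangle-free graphs by induction on word
length, gives cancellation and least common multiples of atoms, hence greatest common left divisors.
Inverting the central element `Δ ^ 2` then embeds the positive monoid into `B_n`, so the prefix
order is a left invariant meet-semilattice order on all of `B_n` for which `Δ` is a Garside element.

The condition `Δ ^ p ≤ c⁻¹ * y * c` means `c * Δ ^ p ≤ y * c`, and both sides of the latter commute
with meets in `c`. This settles summit sets and, applied to inverses, super summit sets.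

For periodicity under cycling, Gebhardt's transport carries conjugators along cycling orbits. It
commutes with meets and fixes the powers of `Δ`. Between two periodic elements an iterated transport
permutes the finite set of conjugators with a given target in an interval `[Δ ^ k, Δ ^ l]`, so these
conjugators are periodic under transport, a property inherited by meets and by conjugated elements.
Decycling is, up to conjugation by `Δ`, cycling of the inverse.
-/

section LeftDivisibility

variable {M : Type*} [Monoid M]

/-- `m` is a least common right multiple of `a` and `b`; in a non-commutative monoid `a ∣ b`
means that `a` divides `b` on the left. -/
def IsRightLcm (a b m : M) : Prop := ∀ c, m ∣ c ↔ a ∣ c ∧ b ∣ c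

/-- `m` is a greatest common left divisor of `a` and `b`. -/
def IsLeftGcd (a b m : M) : Prop := ∀ c, c ∣ m ↔ c ∣ a ∧ c ∣ b

theorem IsRightLcm.symm {a b m : M} (h : IsRightLcm a b m) : IsRightLcm b a m :=
  fun c => (h c).trans and_comm

theorem IsRightLcm.dvd_left {a b m : M} (h : IsRightLcm a b m) : a ∣ m := ((h m).1 dvd_rfl).1

theorem IsRightLcm.dvd_right {a b m : M} (h : IsRightLcm a b m) : b ∣ m := ((h m).1 dvd_rfl).2

theorem isRightLcm_one_left (a : M) : IsRightLcm 1 a a := fun c => by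
  rw [and_iff_right ⟨c, (one_mul c).symm⟩]

section Cancel

variable [IsLeftCancelMul M]

theorem mul_dvd_mul_left_iff_of_isLeftCancelMul {a b c : M} : a * b ∣ a * c ↔ b ∣ c :=
  ⟨fun ⟨d, hd⟩ => ⟨d, mul_left_cancel (hd.trans (mul_assoc a b d))⟩, mul_dvd_mul_left a⟩

theorem IsRightLcm.mul_left_of_isRightLcm {s w x u e : M} (h : IsRightLcm s w (s * x))
    (he : IsRightLcm u x e) : IsRightLcm (s * u) w (s * e) := by
  intro c
  by_cases hs : s ∣ c
  · obtain ⟨c, rfl⟩ := hs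
    have hx : x ∣ c ↔ w ∣ s * c := by
      rw [← mul_dvd_mul_left_iff_of_isLeftCancelMul (a := s), h, and_iff_right (dvd_mul_right s c)]
    rw [mul_dvd_mul_left_iff_of_isLeftCancelMul, mul_dvd_mul_left_iff_of_isLeftCancelMul, he, hx]
  · have hn : ∀ u, ¬ s * u ∣ c := fun u hu => hs ((dvd_mul_right s u).trans hu)
    exact iff_of_false (hn e) fun hc => hn u hc.1

end Cancel

section Atoms

variable {A : Set M} (hA : Submonoid.closure A = ⊤) {ℓ : M →* Multiplicative ℕ}
  (hℓ : ∀ s ∈ A, 0 < (ℓ s).toAdd)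

include hA in
theorem eq_one_or_exists_mul_of_closure_eq_top (x : M) : x = 1 ∨ ∃ s ∈ A, ∃ y, x = s * y := by
  induction x using Submonoid.induction_of_closure_eq_top_left hA with
  | one => exact .inl rfl
  | mul_left s hs y _ => exact .inr ⟨s, hs, y, rfl⟩

include hA hℓ

theorem eq_of_dvd_of_length_le {x y : M} (h : x ∣ y) (hxy : (ℓ y).toAdd ≤ (ℓ x).toAdd) :
    x = y := by
  obtain ⟨z, rfl⟩ := h
  rcases eq_one_or_exists_mul_of_closure_eq_top hA z with rfl | ⟨s, hs, z, rfl⟩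
  · exact (mul_one x).symm
  · have := hℓ s hs
    simp only [map_mul, toAdd_mul] at hxy
    omega

variable [IsLeftCancelMul M]
  (hlcm : ∀ s ∈ A, ∀ t ∈ A, ∀ m, s ∣ m → t ∣ m → ∃ e, IsRightLcm s t e)
include hlcm

theorem exists_isRightLcm_of_atoms {u v m : M} (hu : u ∣ m) (hv : v ∣ m) :
    ∃ e, IsRightLcm u v e := by
  induction hk : (ℓ m).toAdd using Nat.strong_induction_on generalizing u v m with | _ k ih
  rcases eq_one_or_exists_mul_of_closure_eq_top hA u with rfl | ⟨s, hs, u, rfl⟩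
  · exact ⟨v, isRightLcm_one_left v⟩
  rcases eq_one_or_exists_mul_of_closure_eq_top hA v with rfl | ⟨t, ht, v, rfl⟩
  · exact ⟨_, (isRightLcm_one_left _).symm⟩
  have hlt : ∀ r ∈ A, ∀ m', m = r * m' → (ℓ m').toAdd < k := by
    rintro r hr m' rfl
    have := hℓ r hr
    simp only [map_mul, toAdd_mul] at hk
    omega
  obtain ⟨m₁, hm₁⟩ := dvd_of_mul_right_dvd hu
  obtain ⟨m₂, hm₂⟩ := dvd_of_mul_right_dvd hv
  obtain ⟨e, he⟩ := hlcm s hs t ht m ⟨m₁, hm₁⟩ ⟨m₂, hm₂⟩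
  obtain ⟨x, rfl⟩ := he.dvd_left
  obtain ⟨y, hxy⟩ := he.dvd_right
  have hx : x ∣ m₁ := by
    rw [← mul_dvd_mul_left_iff_of_isLeftCancelMul (a := s), ← hm₁]
    exact (he m).2 ⟨⟨m₁, hm₁⟩, ⟨m₂, hm₂⟩⟩
  have hu₁ : u ∣ m₁ := mul_dvd_mul_left_iff_of_isLeftCancelMul.1 (hm₁ ▸ hu)
  obtain ⟨e₁, he₁⟩ := ih _ (hlt s hs m₁ hm₁) hu₁ hx rfl
  obtain ⟨f, rfl⟩ := he₁.dvd_right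
  have hsu : IsRightLcm t (s * u) (t * (y * f)) := by
    rw [← mul_assoc, ← hxy, mul_assoc]
    exact (he.mul_left_of_isRightLcm he₁).symm
  have hyf : y * f ∣ m₂ := by
    rw [← mul_dvd_mul_left_iff_of_isLeftCancelMul (a := t), ← hm₂]
    exact (hsu m).2 ⟨⟨m₂, hm₂⟩, hu⟩
  have hv₂ : v ∣ m₂ := mul_dvd_mul_left_iff_of_isLeftCancelMul.1 (hm₂ ▸ hv)
  obtain ⟨e₂, he₂⟩ := ih _ (hlt t ht m₂ hm₂) hv₂ hyf rfl
  exact ⟨t * e₂, (hsu.mul_left_of_isRightLcm he₂).symm⟩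

theorem exists_isLeftGcd_of_atoms (u v : M) : ∃ d, IsLeftGcd u v d := by
  set lengths := (fun c => (ℓ c).toAdd) '' {c | c ∣ u ∧ c ∣ v}
  have hbdd : BddAbove lengths := by
    refine ⟨(ℓ u).toAdd, ?_⟩
    rintro _ ⟨c, ⟨⟨p, rfl⟩, -⟩, rfl⟩
    simp only [map_mul, toAdd_mul, le_add_iff_nonneg_right, zero_le]
  obtain ⟨d, ⟨hdu, hdv⟩, hd⟩ : sSup lengths ∈ lengths :=
    Nat.sSup_mem ⟨_, 1, ⟨⟨u, (one_mul u).symm⟩, ⟨v, (one_mul v).symm⟩⟩, rfl⟩ hbdd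
  refine ⟨d, fun c => ⟨fun h => ⟨h.trans hdu, h.trans hdv⟩, fun ⟨hcu, hcv⟩ => ?_⟩⟩
  obtain ⟨e, he⟩ := exists_isRightLcm_of_atoms hA hℓ hlcm hcu hdu
  have hed : (ℓ e).toAdd ≤ (ℓ d).toAdd :=
    (le_csSup hbdd ⟨e, ⟨(he u).2 ⟨hcu, hdu⟩, (he v).2 ⟨hcv, hdv⟩⟩, rfl⟩).trans_eq hd.symm
  rw [eq_of_dvd_of_length_le hA hℓ he.dvd_right hed]
  exact he.dvd_left

end Atoms

variable [IsLeftCancelMul M]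

theorem IsLeftGcd.mul_left (hgcd : ∀ a b : M, ∃ d, IsLeftGcd a b d) {a b d : M}
    (h : IsLeftGcd a b d) (c : M) : IsLeftGcd (c * a) (c * b) (c * d) := by
  obtain ⟨g, hg⟩ := hgcd (c * a) (c * b)
  obtain ⟨g', rfl⟩ := (hg c).2 ⟨dvd_mul_right c a, dvd_mul_right c b⟩
  have hg' : g' ∣ d := by
    simpa only [h g', mul_dvd_mul_left_iff_of_isLeftCancelMul] using (hg (c * g')).1 dvd_rfl
  have hd : d ∣ g' := by
    rw [← mul_dvd_mul_left_iff_of_isLeftCancelMul (a := c), hg,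
      mul_dvd_mul_left_iff_of_isLeftCancelMul, mul_dvd_mul_left_iff_of_isLeftCancelMul]
    exact (h d).1 dvd_rfl
  exact fun x => Iff.trans
    ⟨fun hx => hx.trans (mul_dvd_mul_left c hd), fun hx => hx.trans (mul_dvd_mul_left c hg')⟩ (hg x)

theorem exists_meet_of_leftFractions (hgcd : ∀ a b : M, ∃ d, IsLeftGcd a b d)
    {G : Type*} [Group G] {φ : M →* G} (hφ : Function.Injective φ)
    (hfrac : ∀ g, ∃ d m, φ d * g = φ m) (x y : G) :
    ∃ z, ∀ c, (∃ p, c * φ p = z) ↔ (∃ p, c * φ p = x) ∧ (∃ p, c * φ p = y) := by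
  have hdvd : ∀ {d g h : G} {a b : M}, d * g = φ a → d * h = φ b →
      ((∃ p, g * φ p = h) ↔ a ∣ b) := by
    intro d g h a b ha hb
    refine exists_congr fun p => ?_
    rw [← mul_right_inj d, ← mul_assoc, ha, hb, ← map_mul, hφ.eq_iff, eq_comm]
  obtain ⟨d₁, x₁, hx₁⟩ := hfrac x
  obtain ⟨d₂, y₂, hy₂⟩ := hfrac (φ d₁ * y)
  obtain ⟨m, hm⟩ := hgcd (d₂ * x₁) y₂
  refine ⟨(φ (d₂ * d₁))⁻¹ * φ m, fun c => ?_⟩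
  obtain ⟨d, c', hc'⟩ := hfrac (φ (d₂ * d₁) * c)
  have hc : φ (d * (d₂ * d₁)) * c = φ c' := by rw [map_mul, mul_assoc, hc']
  rw [hdvd hc (b := d * m) (by rw [map_mul, mul_assoc, mul_inv_cancel_left, map_mul]),
    hdvd hc (b := d * (d₂ * x₁)) (by simp only [map_mul, mul_assoc, hx₁]),
    hdvd hc (b := d * y₂) (by simp only [map_mul, mul_assoc, hy₂])]
  exact hm.mul_left hgcd d c'

end LeftDivisibility

section ArtinMonoid

variable {ι : Type*}

/-- The relations of the simply laced Artin monoid of `Γ`: adjacent generators braid, distinct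
non-adjacent ones commute. -/
inductive ArtinRel (Γ : SimpleGraph ι) : FreeMonoid ι → FreeMonoid ι → Prop
  | comm {i j : ι} (hne : i ≠ j) (hij : ¬ Γ.Adj i j) :
      ArtinRel Γ (.of i * .of j) (.of j * .of i)
  | braid {i j : ι} (hij : Γ.Adj i j) :
      ArtinRel Γ (.of i * .of j * .of i) (.of j * .of i * .of j)

/-- The simply laced Artin monoid of `Γ`; for a path on `n - 1` vertices this is the monoid of
positive braid words on `n` strands. -/
abbrev ArtinMonoid (Γ : SimpleGraph ι) := PresentedMonoid (ArtinRel Γ)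

namespace ArtinMonoid

variable {Γ : SimpleGraph ι} {i j k : ι} {L : ℕ}

/-- The class of a word in the generators. -/
abbrev mk : FreeMonoid ι →* ArtinMonoid Γ := PresentedMonoid.mk (ArtinRel Γ)

/-- The standard generator attached to a vertex. -/
def gen (i : ι) : ArtinMonoid Γ := PresentedMonoid.of (ArtinRel Γ) i

theorem mk_of (i : ι) : mk (.of i) = (gen i : ArtinMonoid Γ) := rfl

theorem gen_comm (hne : i ≠ j) (hij : ¬ Γ.Adj i j) :
    (gen i * gen j : ArtinMonoid Γ) = gen j * gen i :=
  PresentedMonoid.mk_eq_mk_of_rel (.comm hne hij)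

theorem gen_braid (hij : Γ.Adj i j) :
    (gen i * gen j * gen i : ArtinMonoid Γ) = gen j * gen i * gen j :=
  PresentedMonoid.mk_eq_mk_of_rel (.braid hij)

theorem gen_mul_gen_mul_comm (hne : i ≠ j) (hij : ¬ Γ.Adj i j) (x : ArtinMonoid Γ) :
    gen i * (gen j * x) = gen j * (gen i * x) := by
  rw [← mul_assoc, gen_comm hne hij, mul_assoc]

theorem gen_mul_gen_mul_gen_mul (hij : Γ.Adj i j) (x : ArtinMonoid Γ) :
    gen i * (gen j * (gen i * x)) = gen j * (gen i * (gen j * x)) := by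
  simp only [← mul_assoc, gen_braid hij]

theorem closure_range_gen : Submonoid.closure (Set.range (gen (Γ := Γ))) = ⊤ :=
  PresentedMonoid.closure_range_of (ArtinRel Γ)

/-- Word length, as a homomorphism. -/
def lengthHom : ArtinMonoid Γ →* Multiplicative ℕ :=
  PresentedMonoid.lift (fun _ => .ofAdd 1) fun _ _ h => by
    cases h <;> simp only [map_mul, FreeMonoid.lift_eval_of]

/-- Word length. -/
def length (x : ArtinMonoid Γ) : ℕ := (lengthHom x).toAdd

@[simp]
theorem length_mul (x y : ArtinMonoid Γ) : length (x * y) = length x + length y := by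
  simp only [length, map_mul, toAdd_mul]

@[simp]
theorem length_gen (i : ι) : length (gen i : ArtinMonoid Γ) = 1 := rfl

open Classical in
/-- The complement of `gen i` in the least common right multiple of `gen i` and `gen j`. -/
noncomputable def complement (i j : ι) : ArtinMonoid Γ :=
  if i = j then 1 else if Γ.Adj i j then gen j * gen i else gen j

theorem complement_self (i : ι) : (complement i i : ArtinMonoid Γ) = 1 := if_pos rfl

theorem complement_of_adj (hij : Γ.Adj i j) :
    (complement i j : ArtinMonoid Γ) = gen j * gen i := by
  rw [complement, if_neg hij.ne, if_pos hij]

theorem complement_of_not_adj (hne : i ≠ j) (hij : ¬ Γ.Adj i j) :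
    (complement i j : ArtinMonoid Γ) = gen j := by
  rw [complement, if_neg hne, if_neg hij]

theorem gen_mul_complement (i j : ι) :
    (gen i * complement i j : ArtinMonoid Γ) = gen j * complement j i := by
  by_cases hne : i = j
  · rw [hne]
  by_cases hij : Γ.Adj i j
  · rw [complement_of_adj hij, complement_of_adj hij.symm, ← mul_assoc, gen_braid hij, mul_assoc]
  · rw [complement_of_not_adj hne hij, complement_of_not_adj (Ne.symm hne) (mt .symm hij),
      gen_comm hne hij]

/-- `gen i * u` and `gen j * v` are the same multiple of the least common multiple of `gen i`
and `gen j`. -/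
def LcmRel (i : ι) (u : ArtinMonoid Γ) (j : ι) (v : ArtinMonoid Γ) : Prop :=
  ∃ z, u = complement i j * z ∧ v = complement j i * z

namespace LcmRel

variable {u v w : ArtinMonoid Γ}

theorem refl (i : ι) (u : ArtinMonoid Γ) : LcmRel i u i u :=
  ⟨u, by rw [complement_self, one_mul], by rw [complement_self, one_mul]⟩

theorem symm (h : LcmRel i u j v) : LcmRel j v i u :=
  h.imp fun _ hz => hz.symm

theorem mul_right (h : LcmRel i u j v) (x : ArtinMonoid Γ) : LcmRel i (u * x) j (v * x) := by
  obtain ⟨z, rfl, rfl⟩ := h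
  exact ⟨z * x, mul_assoc _ _ _, mul_assoc _ _ _⟩

theorem gen_mul_eq (h : LcmRel i u j v) : gen i * u = gen j * v := by
  obtain ⟨z, rfl, rfl⟩ := h
  rw [← mul_assoc, gen_mul_complement, mul_assoc]

theorem length_eq (h : LcmRel i u j v) : length u = length v := by
  simpa using congrArg length h.gen_mul_eq

theorem iff_eq : LcmRel i u i v ↔ u = v := by
  simp only [LcmRel, complement_self, one_mul]
  exact ⟨fun ⟨_, hu, hv⟩ => hu.trans hv.symm, fun h => ⟨u, rfl, h.symm⟩⟩

theorem iff_of_not_adj (hne : i ≠ j) (hij : ¬ Γ.Adj i j) :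
    LcmRel i u j v ↔ ∃ z, u = gen j * z ∧ v = gen i * z := by
  rw [LcmRel, complement_of_not_adj hne hij, complement_of_not_adj hne.symm (mt .symm hij)]

theorem iff_of_adj (hij : Γ.Adj i j) :
    LcmRel i u j v ↔ ∃ z, u = gen j * (gen i * z) ∧ v = gen i * (gen j * z) := by
  simp only [LcmRel, complement_of_adj hij, complement_of_adj hij.symm, mul_assoc]

end LcmRel

/-- Garside's lemma for words of length at most `L`. -/
def GarsideUpTo (Γ : SimpleGraph ι) (L : ℕ) : Prop :=
  ∀ ⦃i j : ι⦄ ⦃u v : ArtinMonoid Γ⦄, length u < L → gen i * u = gen j * v → LcmRel i u j v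

namespace GarsideUpTo

variable {u v w : ArtinMonoid Γ}

theorem mul_left_cancel (h : GarsideUpTo Γ L) (x : ArtinMonoid Γ) :
    length (x * u) ≤ L → x * u = x * v → u = v := by
  induction x using Submonoid.induction_of_closure_eq_top_left closure_range_gen with
  | one => simp only [one_mul, imp_self, implies_true]
  | mul_left _ hi y ih =>
    obtain ⟨i, rfl⟩ := hi
    intro hL he
    simp only [mul_assoc, length_mul, length_gen] at hL he ih
    exact ih (by omega) (LcmRel.iff_eq.1 (h (by simp only [length_mul]; omega) he))

theorem lcmRel_trans_self (h : GarsideUpTo Γ L) (hu : length u ≤ L) (h₁ : LcmRel i u k w)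
    (h₂ : LcmRel k w i v) : u = v := by
  have hw := h₁.length_eq
  obtain ⟨z, rfl, rfl⟩ := h₁
  obtain ⟨z', he, rfl⟩ := h₂
  rw [h.mul_left_cancel _ (hw ▸ hu) he]

theorem lcmRel_trans_of_not_adj_of_not_adj (h : GarsideUpTo Γ L) (hu : length u ≤ L)
    (h₁ : LcmRel i u k w) (h₂ : LcmRel k w j v) (hne : i ≠ j) (hnik : i ≠ k) (hnkj : k ≠ j)
    (hik : ¬ Γ.Adj i k) (hkj : ¬ Γ.Adj k j) : LcmRel i u j v := by
  have hki : ¬ Γ.Adj k i := mt .symm hik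
  obtain ⟨z, rfl, rfl⟩ := (LcmRel.iff_of_not_adj hnik hik).1 h₁
  obtain ⟨z', he, rfl⟩ := (LcmRel.iff_of_not_adj hnkj hkj).1 h₂
  have hzz' : LcmRel i z j z' := h (by simpa [Nat.add_one_le_iff, add_comm] using hu) he
  by_cases hij : Γ.Adj i j
  · obtain ⟨y, rfl, rfl⟩ := (LcmRel.iff_of_adj hij).1 hzz'
    refine (LcmRel.iff_of_adj hij).2 ⟨gen k * y, ?_, ?_⟩
    · rw [gen_mul_gen_mul_comm hnkj hkj, gen_mul_gen_mul_comm hnik.symm hki]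
    · rw [gen_mul_gen_mul_comm hnik.symm hki, gen_mul_gen_mul_comm hnkj hkj]
  · obtain ⟨y, rfl, rfl⟩ := (LcmRel.iff_of_not_adj hne hij).1 hzz'
    exact (LcmRel.iff_of_not_adj hne hij).2
      ⟨gen k * y, gen_mul_gen_mul_comm hnkj hkj _, gen_mul_gen_mul_comm hnik.symm hki _⟩

theorem lcmRel_trans_of_not_adj_of_adj (h : GarsideUpTo Γ L) (hu : length u ≤ L)
    (h₁ : LcmRel i u k w) (h₂ : LcmRel k w j v) (hne : i ≠ j) (hnik : i ≠ k)
    (hik : ¬ Γ.Adj i k) (hkj : Γ.Adj k j) : LcmRel i u j v := by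
  have hki : ¬ Γ.Adj k i := mt .symm hik
  obtain ⟨z, rfl, rfl⟩ := (LcmRel.iff_of_not_adj hnik hik).1 h₁
  obtain ⟨z', he, rfl⟩ := (LcmRel.iff_of_adj hkj).1 h₂
  simp only [length_mul, length_gen] at hu
  have hz : LcmRel i z j (gen k * z') := h (by omega) he
  by_cases hij : Γ.Adj i j
  · obtain ⟨y, rfl, hy⟩ := (LcmRel.iff_of_adj hij).1 hz
    have hlen := congrArg length hy
    simp only [length_mul, length_gen] at hu hlen
    obtain ⟨y', rfl, hy'⟩ := (LcmRel.iff_of_not_adj hnik.symm hki).1 (h (by omega) hy)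
    simp only [length_mul, length_gen] at hlen
    obtain ⟨y'', rfl, rfl⟩ := (LcmRel.iff_of_adj hkj.symm).1 (h (by omega) hy')
    refine (LcmRel.iff_of_adj hij).2 ⟨gen k * (gen j * (gen i * y'')), ?_, ?_⟩
    · rw [gen_mul_gen_mul_comm hnik hik, gen_mul_gen_mul_gen_mul hkj,
        gen_mul_gen_mul_gen_mul hij.symm, gen_mul_gen_mul_comm hnik.symm hki]
    · rw [← gen_mul_gen_mul_gen_mul hij, gen_mul_gen_mul_comm hnik.symm hki,
        gen_mul_gen_mul_gen_mul hkj.symm, gen_mul_gen_mul_comm hnik.symm hki]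
  · obtain ⟨y, rfl, hy⟩ := (LcmRel.iff_of_not_adj hne hij).1 hz
    have hlen := congrArg length hy
    simp only [length_mul, length_gen] at hu hlen
    obtain ⟨y', rfl, rfl⟩ := (LcmRel.iff_of_not_adj hnik.symm hki).1 (h (by omega) hy)
    refine (LcmRel.iff_of_not_adj hne hij).2 ⟨gen k * (gen j * y'), ?_, ?_⟩
    · rw [gen_mul_gen_mul_gen_mul hkj]
    · rw [gen_mul_gen_mul_comm hnik hik, gen_mul_gen_mul_comm hne hij]

theorem lcmRel_trans_of_adj_of_adj (h : GarsideUpTo Γ L) (hu : length u ≤ L)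
    (h₁ : LcmRel i u k w) (h₂ : LcmRel k w j v) (hne : i ≠ j)
    (hik : Γ.Adj i k) (hkj : Γ.Adj k j) (hij : ¬ Γ.Adj i j) : LcmRel i u j v := by
  have hji : ¬ Γ.Adj j i := mt .symm hij
  obtain ⟨z, rfl, rfl⟩ := (LcmRel.iff_of_adj hik).1 h₁
  obtain ⟨z', he, rfl⟩ := (LcmRel.iff_of_adj hkj).1 h₂
  have hlen := congrArg length he
  simp only [length_mul, length_gen] at hu hlen
  obtain ⟨y, hy, hy'⟩ :=
    (LcmRel.iff_of_not_adj hne hij).1 (h (by simp only [length_mul, length_gen]; omega) he)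
  obtain ⟨a, rfl, rfl⟩ := (LcmRel.iff_of_adj hkj).1 (h (by omega) hy)
  obtain ⟨b, rfl, hab⟩ := (LcmRel.iff_of_adj hik.symm).1 (h (by omega) hy')
  simp only [length_mul, length_gen] at hu hlen
  have hab' : gen j * a = gen i * b :=
    h.mul_left_cancel _ (by simp only [length_mul, length_gen]; omega) hab
  obtain ⟨c, rfl, rfl⟩ := (LcmRel.iff_of_not_adj hne.symm hji).1 (h (by omega) hab')
  refine (LcmRel.iff_of_not_adj hne hij).2 ⟨gen k * (gen i * (gen j * (gen k * c))), ?_, ?_⟩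
  · rw [gen_mul_gen_mul_comm hne hij, gen_mul_gen_mul_gen_mul hik, gen_mul_gen_mul_gen_mul hkj,
      gen_mul_gen_mul_comm hne hij]
  · rw [gen_mul_gen_mul_comm hne.symm hji, gen_mul_gen_mul_gen_mul hkj.symm,
      gen_mul_gen_mul_gen_mul hik.symm]

theorem lcmRel_trans (h : GarsideUpTo Γ L) (hΓ : Γ.CliqueFree 3) (hu : length u ≤ L)
    (h₁ : LcmRel i u k w) (h₂ : LcmRel k w j v) : LcmRel i u j v := by
  by_cases hnik : i = k
  · subst hnik
    rwa [LcmRel.iff_eq.1 h₁]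
  by_cases hnkj : k = j
  · subst hnkj
    rwa [← LcmRel.iff_eq.1 h₂]
  by_cases hne : i = j
  · subst hne
    exact LcmRel.iff_eq.2 (h.lcmRel_trans_self hu h₁ h₂)
  by_cases hik : Γ.Adj i k <;> by_cases hkj : Γ.Adj k j
  · have hij : ¬ Γ.Adj i j := fun hij => by
      classical exact hΓ {i, k, j} (SimpleGraph.is3Clique_iff.2 ⟨i, k, j, hik, hij, hkj, rfl⟩)
    exact h.lcmRel_trans_of_adj_of_adj hu h₁ h₂ hne hik hkj hij
  · have hv : length v ≤ L := by rwa [← h₂.length_eq, ← h₁.length_eq]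
    exact (h.lcmRel_trans_of_not_adj_of_adj hv h₂.symm h₁.symm (Ne.symm hne) (Ne.symm hnkj)
      (mt .symm hkj) hik.symm).symm
  · exact h.lcmRel_trans_of_not_adj_of_adj hu h₁ h₂ hne hnik hik hkj
  · exact h.lcmRel_trans_of_not_adj_of_not_adj hu h₁ h₂ hne hnik hnkj hik hkj

end GarsideUpTo

/-- Two words are both empty, or their first letters and remaining tails satisfy `LcmRel`.
This is the relation shown to contain the congruence generated by `ArtinRel Γ`. -/
def WordLcmRel (Γ : SimpleGraph ι) (w w' : FreeMonoid ι) : Prop :=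
  match w.toList, w'.toList with
  | [], [] => True
  | i :: u, j :: v => LcmRel (Γ := Γ) i (mk (.ofList u)) j (mk (.ofList v))
  | _, _ => False

namespace WordLcmRel

variable {u v w w' : FreeMonoid ι}

theorem one_one : WordLcmRel Γ 1 1 := trivial

theorem of_mul_of_mul :
    WordLcmRel Γ (.of i * u) (.of j * v) ↔ LcmRel (Γ := Γ) i (mk u) j (mk v) := Iff.rfl

theorem refl (w : FreeMonoid ι) : WordLcmRel Γ w w := by
  cases w using FreeMonoid.casesOn with
  | one => exact one_one
  | of_mul i u => exact LcmRel.refl i _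

theorem symm (h : WordLcmRel Γ w w') : WordLcmRel Γ w' w := by
  cases w using FreeMonoid.casesOn <;> cases w' using FreeMonoid.casesOn
  · exact one_one
  · exact h.elim
  · exact h.elim
  · exact LcmRel.symm h

theorem of_rel (h : ArtinRel Γ w w') : WordLcmRel Γ w w' := by
  cases h with
  | comm hne hij =>
    exact (LcmRel.iff_of_not_adj hne hij).2 ⟨1, (mul_one _).symm, (mul_one _).symm⟩
  | braid hij =>
    exact (LcmRel.iff_of_adj hij).2 ⟨1, by simp only [mul_one]; rfl, by simp only [mul_one]; rfl⟩

theorem trans (hL : GarsideUpTo Γ L) (hΓ : Γ.CliqueFree 3)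
    (hw : length (mk w : ArtinMonoid Γ) ≤ L + 1) (h₁ : WordLcmRel Γ w u)
    (h₂ : WordLcmRel Γ u w') : WordLcmRel Γ w w' := by
  cases w using FreeMonoid.casesOn <;> cases u using FreeMonoid.casesOn
  · exact h₂
  · exact h₁.elim
  · exact h₁.elim
  cases w' using FreeMonoid.casesOn
  · exact h₂.elim
  · rw [map_mul, mk_of, length_mul, length_gen, add_comm, Nat.add_le_add_iff_right] at hw
    exact hL.lcmRel_trans hΓ hw h₁ h₂

theorem mul (h₁ : WordLcmRel Γ w w') (h₂ : WordLcmRel Γ u v)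
    (huv : (mk u : ArtinMonoid Γ) = mk v) : WordLcmRel Γ (w * u) (w' * v) := by
  cases w using FreeMonoid.casesOn <;> cases w' using FreeMonoid.casesOn
  · rwa [one_mul, one_mul]
  · exact h₁.elim
  · exact h₁.elim
  · rw [mul_assoc, mul_assoc, of_mul_of_mul, map_mul, map_mul, huv]
    exact LcmRel.mul_right h₁ _

theorem of_conGenRel (hL : GarsideUpTo Γ L) (hΓ : Γ.CliqueFree 3)
    (h : ConGen.Rel (ArtinRel Γ) w w') :
    length (mk w : ArtinMonoid Γ) ≤ L + 1 → WordLcmRel Γ w w' := by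
  induction h with
  | of _ _ h => exact fun _ => of_rel h
  | refl w => exact fun _ => refl w
  | symm h ih =>
    intro hw
    exact (ih (PresentedMonoid.mk_eq_mk_iff.2 h ▸ hw)).symm
  | trans h _ ih₁ ih₂ =>
    intro hw
    exact (ih₁ hw).trans hL hΓ hw (ih₂ (PresentedMonoid.mk_eq_mk_iff.2 h ▸ hw))
  | mul _ h ih₁ ih₂ =>
    intro hw
    rw [map_mul, length_mul] at hw
    exact (ih₁ (by omega)).mul (ih₂ (by omega)) (PresentedMonoid.mk_eq_mk_iff.2 h)

end WordLcmRel

theorem garsideUpTo (hΓ : Γ.CliqueFree 3) (L : ℕ) : GarsideUpTo Γ L := by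
  induction L with
  | zero => exact fun _ _ _ _ h => absurd h (Nat.not_lt_zero _)
  | succ L ih =>
    intro i j u v hu he
    induction u using PresentedMonoid.inductionOn with | _ u
    induction v using PresentedMonoid.inductionOn with | _ v
    refine WordLcmRel.of_conGenRel (w := .of i * u) (w' := .of j * v) ih hΓ
      (PresentedMonoid.mk_eq_mk_iff.1 he) ?_
    rw [map_mul, mk_of, length_mul, length_gen, add_comm]
    exact Nat.add_le_add_right (Nat.le_of_lt_succ hu) 1

theorem lcmRel_of_gen_mul_eq (hΓ : Γ.CliqueFree 3) {u v : ArtinMonoid Γ}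
    (h : gen i * u = gen j * v) : LcmRel i u j v :=
  garsideUpTo hΓ (length u + 1) (Nat.lt_succ_self _) h

theorem isLeftCancelMul (hΓ : Γ.CliqueFree 3) : IsLeftCancelMul (ArtinMonoid Γ) :=
  ⟨fun x _ _ h => (garsideUpTo hΓ _).mul_left_cancel x le_rfl h⟩

theorem isRightLcm_gen_gen (hΓ : Γ.CliqueFree 3) (i j : ι) :
    IsRightLcm (gen i) (gen j) (gen i * complement i j : ArtinMonoid Γ) := by
  intro c
  constructor
  · intro h
    exact ⟨(dvd_mul_right _ _).trans h, (Dvd.intro _ (gen_mul_complement i j).symm).trans h⟩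
  · rintro ⟨⟨u, rfl⟩, ⟨v, hv⟩⟩
    obtain ⟨z, rfl, -⟩ := lcmRel_of_gen_mul_eq hΓ hv
    exact ⟨z, (mul_assoc _ _ _).symm⟩

end ArtinMonoid

end ArtinMonoid

section HalfTwist

variable {X : Type*} [Monoid X]

/-- The first `N` terms of `t` satisfy Artin's braid relations. -/
structure IsBraidSeq (t : ℕ → X) (N : ℕ) : Prop where
  commute : ∀ i j, i + 1 < j → j < N → Commute (t i) (t j)
  braid : ∀ i, i + 1 < N → t i * t (i + 1) * t i = t (i + 1) * t i * t (i + 1)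

/-- `t 0 * t 1 * ⋯ * t (k - 1)`. -/
def ascendingProd (t : ℕ → X) (k : ℕ) : X := ((List.range k).map t).prod

/-- `t (k - 1) * ⋯ * t 1 * t 0`. -/
def descendingProd (t : ℕ → X) (k : ℕ) : X := ((List.range k).reverse.map t).prod

/-- Garside's half twist `(t 0 ⋯ t (k - 1)) (t 0 ⋯ t (k - 2)) ⋯ (t 0)`. -/
def halfTwist (t : ℕ → X) (k : ℕ) : X :=
  ((List.range k).reverse.map fun j => ascendingProd t (j + 1)).prod

theorem ascendingProd_succ (t : ℕ → X) (k : ℕ) :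
    ascendingProd t (k + 1) = ascendingProd t k * t k := List.prod_range_succ t k

theorem descendingProd_succ (t : ℕ → X) (k : ℕ) :
    descendingProd t (k + 1) = t k * descendingProd t k := by
  simp only [descendingProd, List.range_succ, List.reverse_append, List.reverse_singleton,
    List.singleton_append, List.map_cons, List.prod_cons]

theorem halfTwist_succ (t : ℕ → X) (k : ℕ) :
    halfTwist t (k + 1) = ascendingProd t (k + 1) * halfTwist t k := by
  simp only [halfTwist, List.range_succ, List.reverse_append, List.reverse_singleton,
    List.singleton_append, List.map_cons, List.prod_cons]

theorem halfTwist_zero (t : ℕ → X) : halfTwist t 0 = 1 := rfl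

theorem halfTwist_one (t : ℕ → X) : halfTwist t 1 = t 0 := by
  simp only [halfTwist, ascendingProd, List.range_one, List.reverse_singleton, List.map_cons,
    List.map_nil, List.prod_singleton, zero_add]

theorem map_halfTwist {Y : Type*} [Monoid Y] (f : X →* Y) (t : ℕ → X) (k : ℕ) :
    f (halfTwist t k) = halfTwist (f ∘ t) k := by
  simp only [halfTwist, ascendingProd, map_list_prod, List.map_map, Function.comp_def]

namespace IsBraidSeq

variable {t : ℕ → X} {N i j k : ℕ} (ht : IsBraidSeq t N)
include ht

theorem commute_ascendingProd (hkj : k < j) (hj : j < N) : Commute (t j) (ascendingProd t k) := by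
  refine Commute.list_prod_right _ _ fun x hx => ?_
  obtain ⟨i, hi, rfl⟩ := List.mem_map.1 hx
  exact (ht.commute i j (by have := List.mem_range.1 hi; omega) hj).symm

theorem commute_descendingProd (hkj : k < j) (hj : j < N) :
    Commute (t j) (descendingProd t k) := by
  refine Commute.list_prod_right _ _ fun x hx => ?_
  obtain ⟨i, hi, rfl⟩ := List.mem_map.1 hx
  exact (ht.commute i j (by have := List.mem_range.1 (List.mem_reverse.1 hi); omega) hj).symm

theorem commute_halfTwist (hkj : k < j) (hj : j < N) : Commute (t j) (halfTwist t k) := by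
  refine Commute.list_prod_right _ _ fun x hx => ?_
  obtain ⟨i, hi, rfl⟩ := List.mem_map.1 hx
  exact ht.commute_ascendingProd (by have := List.mem_range.1 (List.mem_reverse.1 hi); omega) hj

theorem halfTwist_succ_eq_mul_descendingProd (hk : k < N) :
    halfTwist t (k + 1) = halfTwist t k * descendingProd t (k + 1) := by
  induction k with
  | zero => exact (halfTwist_succ t 0).trans (by rw [halfTwist_zero, mul_one, one_mul]; rfl)
  | succ k ih =>
    have hcomm := ht.commute_halfTwist (Nat.lt_succ_self k) hk
    calc halfTwist t (k + 1 + 1)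
        = ascendingProd t (k + 1) * t (k + 1) * (halfTwist t k * descendingProd t (k + 1)) := by
          rw [halfTwist_succ, ascendingProd_succ, ih (by omega)]
      _ = ascendingProd t (k + 1) * halfTwist t k * (t (k + 1) * descendingProd t (k + 1)) := by
          rw [mul_assoc, ← mul_assoc (t (k + 1)), hcomm.eq]
          simp only [mul_assoc]
      _ = halfTwist t (k + 1) * descendingProd t (k + 1 + 1) := by
          rw [halfTwist_succ, descendingProd_succ t (k + 1)]

theorem semiconjBy_ascendingProd (hk : k ≤ N) (hi : i + 1 < k) :
    SemiconjBy (ascendingProd t k) (t i) (t (i + 1)) := by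
  induction k with
  | zero => omega
  | succ k ih =>
    rcases Nat.lt_or_ge (i + 1) k with h | h
    · rw [ascendingProd_succ]
      exact (ih (by omega) h).mul_left (ht.commute i k (by omega) (by omega)).symm
    · obtain rfl : k = i + 1 := by omega
      have hcomm := ht.commute_ascendingProd (Nat.lt_succ_self i) (by omega)
      rw [ascendingProd_succ, ascendingProd_succ, mul_assoc]
      rw [SemiconjBy, mul_assoc, ht.braid i (by omega), mul_assoc (t (i + 1)), ← mul_assoc,
        ← hcomm.eq, mul_assoc]

theorem semiconjBy_descendingProd (hk : k ≤ N) (hi : i + 1 < k) :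
    SemiconjBy (descendingProd t k) (t (i + 1)) (t i) := by
  induction k with
  | zero => omega
  | succ k ih =>
    rcases Nat.lt_or_ge (i + 1) k with h | h
    · rw [descendingProd_succ]
      exact SemiconjBy.mul_left (ht.commute i k (by omega) (by omega)).symm (ih (by omega) h)
    · obtain rfl : k = i + 1 := by omega
      have hcomm := ht.commute_descendingProd (Nat.lt_succ_self i) (by omega)
      rw [descendingProd_succ, descendingProd_succ, ← mul_assoc]
      rw [SemiconjBy, mul_assoc, ← hcomm.eq, ← mul_assoc, ← ht.braid i (by omega), mul_assoc,
        mul_assoc, mul_assoc]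

theorem semiconjBy_halfTwist (hk : k ≤ N) (hi : i < k) :
    SemiconjBy (halfTwist t k) (t i) (t (k - 1 - i)) := by
  induction k generalizing i with
  | zero => omega
  | succ k ih =>
    rcases Nat.lt_or_ge i k with h | h
    · have hshift := ht.semiconjBy_ascendingProd hk (i := k - 1 - i) (by omega)
      rw [show k - 1 - i + 1 = k + 1 - 1 - i by omega] at hshift
      rw [halfTwist_succ]
      exact hshift.mul_left (ih (by omega) h)
    · obtain rfl : i = k := by omega
      cases i with
      | zero => rw [halfTwist_one]; exact Commute.refl _
      | succ i =>
        have hshift := ih (i := i) (by omega) (by omega)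
        rw [show i + 1 - 1 - i = i + 1 + 1 - 1 - (i + 1) by omega] at hshift
        rw [ht.halfTwist_succ_eq_mul_descendingProd (by omega)]
        exact hshift.mul_left (ht.semiconjBy_descendingProd hk (by omega))

theorem dvd_halfTwist (hk : k ≤ N) (hi : i < k) : t i ∣ halfTwist t k := by
  induction k generalizing i with
  | zero => omega
  | succ k ih =>
    rw [halfTwist_succ]
    cases i with
    | zero =>
      rw [ascendingProd, List.range_succ_eq_map, List.map_cons, List.prod_cons, mul_assoc]
      exact dvd_mul_right _ _
    | succ i =>
      obtain ⟨y, hy⟩ := ih (i := i) (by omega) (by omega)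
      rw [hy, ← mul_assoc, (ht.semiconjBy_ascendingProd hk (by omega)).eq, mul_assoc]
      exact dvd_mul_right _ _

end IsBraidSeq

end HalfTwist

theorem mem_periodicPts_iterate_iff {α : Type*} {f : α → α} {x : α} {k : ℕ} (hk : 0 < k) :
    x ∈ Function.periodicPts f^[k] ↔ x ∈ Function.periodicPts f := by
  constructor
  · rintro ⟨m, hm, hx⟩
    refine Function.mk_mem_periodicPts (Nat.mul_pos hk hm) ?_
    rwa [Function.IsPeriodicPt, Function.iterate_mul]
  · rintro ⟨m, hm, hx⟩
    exact Function.mk_mem_periodicPts hm (hx.iterate k)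

theorem inf_mem_periodicPts {α : Type*} [SemilatticeInf α] {f : α → α}
    (hf : ∀ x y, f (x ⊓ y) = f x ⊓ f y) {x y : α} (hx : x ∈ Function.periodicPts f)
    (hy : y ∈ Function.periodicPts f) : x ⊓ y ∈ Function.periodicPts f := by
  obtain ⟨k, hk, hxk⟩ := hx
  obtain ⟨l, hl, hyl⟩ := hy
  have hiter : ∀ N, f^[N] (x ⊓ y) = f^[N] x ⊓ f^[N] y := fun N => by
    induction N with
    | zero => rfl
    | succ N ih => simp only [Function.iterate_succ_apply', ih, hf]
  refine Function.mk_mem_periodicPts (Nat.mul_pos hk hl) ?_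
  rw [Function.IsPeriodicPt, Function.IsFixedPt, hiter, (hxk.mul_const l).eq,
    (hyl.const_mul k).eq]

theorem infClosed_Icc {α : Type*} [SemilatticeInf α] (x y : α) : InfClosed (Set.Icc x y) :=
  fun _ ha _ hb => ⟨le_inf ha.1 hb.1, inf_le_left.trans ha.2⟩

theorem exists_isLeast_of_infClosed {α : Type*} [SemilatticeInf α]
    (hfin : ∀ x y : α, (Set.Icc x y).Finite) {S : Set α} (hS : InfClosed S) (hbdd : BddBelow S)
    (hne : S.Nonempty) : ∃ a, IsLeast S a := by
  obtain ⟨l, hl⟩ := hbdd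
  obtain ⟨b, hb⟩ := hne
  obtain ⟨a, ⟨haS, -, hab⟩, hmin⟩ :=
    ((hfin l b).inter_of_right S).exists_minimal ⟨b, hb, hl hb, le_rfl⟩
  refine ⟨a, haS, fun c hc => ?_⟩
  have hac : a ⊓ c ∈ S := hS haS hc
  exact (hmin ⟨hac, hl hac, inf_le_left.trans hab⟩ inf_le_left).trans inf_le_right

section Summit

variable {G : Type*} [Group G]

theorem isConj_conj (z c : G) : IsConj z (c⁻¹ * z * c) := isConj_iff.2 ⟨c⁻¹, by rw [inv_inv]⟩

theorem inv_conj (c z : G) : (c⁻¹ * z * c)⁻¹ = c⁻¹ * z⁻¹ * c := by group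

theorem isConj_inv_inv_iff {z w : G} : IsConj z⁻¹ w⁻¹ ↔ IsConj z w := by
  simp only [isConj_iff, ← conj_inv, inv_inj]

/-- `z` has the largest infimum in its conjugacy class. -/
def IsSummit (inf : G → ℤ) (z : G) : Prop := ∀ w, IsConj z w → inf w ≤ inf z

theorem IsSummit.inf_eq {inf : G → ℤ} {z w : G} (hz : IsSummit inf z) (hw : IsSummit inf w)
    (h : IsConj z w) : inf z = inf w :=
  le_antisymm (hw z h.symm) (hz w h)

end Summit

section Cycling

variable {G : Type*} [Group G] [SemilatticeInf G]

/-- `Δ` is a Garside element of a group `G` carrying a left invariant order with meets (the prefix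
order of a Garside monoid): right multiplication by `Δ` preserves the order, the powers of `Δ` are
cofinal, intervals are finite, and there is an additive length. -/
structure IsGarsideElement (Δ : G) : Prop where
  one_le : 1 ≤ Δ
  mul_le_mul_iff {x y : G} : x * Δ ≤ y * Δ ↔ x ≤ y
  exists_le_zpow (x : G) : ∃ k : ℤ, x ≤ Δ ^ k
  finite_Icc (x y : G) : (Set.Icc x y).Finite
  exists_strictMono : ∃ ℓ : G →* Multiplicative ℤ, StrictMono ℓ

/-- For `z = Δ ^ p * x` with `x` positive, the conjugate by `Δ ^ p` of the largest common prefix of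
`x` and `Δ`. -/
def initialFactor (Δ : G) (p : ℤ) (z : G) : G := z * Δ ^ (-p) ⊓ Δ

/-- Cycling with respect to a prescribed power `Δ ^ p`. Fixing `p` makes conjugation data
transportable even where `p` is not the infimum. -/
def cyclingAt (Δ : G) (p : ℤ) (z : G) : G :=
  (initialFactor Δ p z)⁻¹ * z * initialFactor Δ p z

/-- Gebhardt's transport: a conjugator from `z` to `c⁻¹ * z * c` induces one between the images of
these elements under cycling. -/
def transport (Δ : G) (p : ℤ) (z c : G) : G :=
  (initialFactor Δ p z)⁻¹ * c * initialFactor Δ p (c⁻¹ * z * c)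

/-- The `N`-fold transport of a conjugator along the cycling orbit of `z`. -/
def iterTransport (Δ : G) (p : ℤ) : ℕ → G → G → G
  | 0, _, c => c
  | N + 1, z, c => iterTransport Δ p N (cyclingAt Δ p z) (transport Δ p z c)

/-- Cycling, where `inf z` stands for the largest `p` with `Δ ^ p ≤ z`. -/
def cycling (Δ : G) (inf : G → ℤ) (z : G) : G := cyclingAt Δ (inf z) z

theorem conj_transport_cyclingAt (Δ : G) (p : ℤ) (z c : G) :
    (transport Δ p z c)⁻¹ * cyclingAt Δ p z * transport Δ p z c =
      cyclingAt Δ p (c⁻¹ * z * c) := by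
  simp only [transport, cyclingAt]
  group

theorem conj_iterTransport_cyclingAt_iterate (Δ : G) (p : ℤ) (N : ℕ) (z c : G) :
    (iterTransport Δ p N z c)⁻¹ * (cyclingAt Δ p)^[N] z * iterTransport Δ p N z c =
      (cyclingAt Δ p)^[N] (c⁻¹ * z * c) := by
  induction N generalizing z c with
  | zero => rfl
  | succ N ih =>
    rw [iterTransport, Function.iterate_succ_apply, ih, conj_transport_cyclingAt,
      Function.iterate_succ_apply]

theorem iterTransport_injOn (Δ : G) (p : ℤ) (N : ℕ) (z w : G) :
    Set.InjOn (iterTransport Δ p N z) {c | c⁻¹ * z * c = w} := by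
  induction N generalizing z w with
  | zero => exact Set.injOn_id _
  | succ N ih =>
    intro c hc d hd hcd
    rw [Set.mem_ofPred_eq] at hc hd
    have htransport : transport Δ p z c = transport Δ p z d :=
      ih _ (cyclingAt Δ p w) (hc ▸ conj_transport_cyclingAt Δ p z c)
        (hd ▸ conj_transport_cyclingAt Δ p z d) hcd
    rw [transport, transport, hc, hd] at htransport
    exact mul_left_cancel (mul_right_cancel htransport)

theorem IsGarsideElement.mul_zpow_le_mul_zpow_iff {Δ : G} (hΔ : IsGarsideElement Δ) (k : ℤ)
    {x y : G} : x * Δ ^ k ≤ y * Δ ^ k ↔ x ≤ y := by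
  induction k generalizing x y with
  | zero => rw [zpow_zero, mul_one, mul_one]
  | succ k ih => rw [zpow_add_one, ← mul_assoc, ← mul_assoc, hΔ.mul_le_mul_iff, ih]
  | pred k ih =>
    rw [← hΔ.mul_le_mul_iff, mul_assoc, mul_assoc, ← zpow_add_one, sub_add_cancel, ih]

theorem IsGarsideElement.inf_mul_zpow {Δ : G} (hΔ : IsGarsideElement Δ) (k : ℤ) (x y : G) :
    (x ⊓ y) * Δ ^ k = x * Δ ^ k ⊓ y * Δ ^ k :=
  OrderIso.map_inf
    { Equiv.mulRight (Δ ^ k) with map_rel_iff' := hΔ.mul_zpow_le_mul_zpow_iff k } x y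

theorem cycling_iterate_eq {Δ : G} {inf : G → ℤ} {z : G}
    (h : ∀ i, inf ((cycling Δ inf)^[i] z) = inf z) (i : ℕ) :
    (cycling Δ inf)^[i] z = (cyclingAt Δ (inf z))^[i] z := by
  induction i with
  | zero => rfl
  | succ i ih => rw [Function.iterate_succ_apply', Function.iterate_succ_apply', cycling, h, ih]

theorem IsGarsideElement.one_le_initialFactor {Δ : G} (hΔ : IsGarsideElement Δ) {p : ℤ} {z : G}
    (hz : Δ ^ p ≤ z) : 1 ≤ initialFactor Δ p z := by
  refine le_inf ?_ hΔ.one_le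
  rwa [← hΔ.mul_zpow_le_mul_zpow_iff p, one_mul, zpow_neg, inv_mul_cancel_right]

theorem IsGarsideElement.initialFactor_eq_self_iff {Δ : G} (hΔ : IsGarsideElement Δ)
    {p : ℤ} {z : G} :
    initialFactor Δ p z = Δ ↔ Δ ^ (p + 1) ≤ z := by
  rw [initialFactor, inf_eq_right, ← hΔ.mul_zpow_le_mul_zpow_iff p, zpow_neg,
    inv_mul_cancel_right, add_comm, zpow_one_add]

variable [MulLeftMono G]

theorem mul_inf_of_mulLeftMono (g x y : G) : g * (x ⊓ y) = g * x ⊓ g * y :=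
  (OrderIso.mulLeft g).map_inf x y

theorem le_conj_iff_mul_le_mul {c x y : G} : x ≤ c⁻¹ * y * c ↔ c * x ≤ y * c := by
  rw [mul_assoc, le_inv_mul_iff_mul_le]

theorem mul_initialFactor_conj (Δ : G) (p : ℤ) (z c : G) :
    c * initialFactor Δ p (c⁻¹ * z * c) = z * c * Δ ^ (-p) ⊓ c * Δ := by
  rw [initialFactor, mul_inf_of_mulLeftMono]
  simp only [mul_assoc, mul_inv_cancel_left]

namespace IsGarsideElement

variable {Δ : G} (hΔ : IsGarsideElement Δ)
include hΔ

theorem exists_zpow_le (x : G) : ∃ k : ℤ, Δ ^ k ≤ x := by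
  obtain ⟨k, hk⟩ := hΔ.exists_le_zpow x⁻¹
  refine ⟨-k, ?_⟩
  rwa [← hΔ.mul_zpow_le_mul_zpow_iff k, zpow_neg, inv_mul_cancel, ← inv_mul_le_iff_le_mul, mul_one]

theorem one_lt [Nontrivial G] : 1 < Δ := by
  refine lt_of_le_of_ne hΔ.one_le ?_
  rintro rfl
  obtain ⟨x, hx⟩ := exists_ne (1 : G)
  obtain ⟨k, hk⟩ := hΔ.exists_le_zpow x
  obtain ⟨l, hl⟩ := hΔ.exists_zpow_le x
  rw [one_zpow] at hk hl
  exact hx (le_antisymm hk hl)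

theorem strictMono_zpow [Nontrivial G] : StrictMono fun k : ℤ => Δ ^ k :=
  strictMono_int_of_lt_succ fun k => by
    rw [zpow_add_one]
    exact lt_mul_of_one_lt_right' _ hΔ.one_lt

theorem exists_isGreatest_zpow_le [Nontrivial G] (x : G) :
    ∃ k : ℤ, IsGreatest {k : ℤ | Δ ^ k ≤ x} k := by
  obtain ⟨l, hl⟩ := hΔ.exists_le_zpow x
  obtain ⟨k, hk, hmax⟩ := Int.exists_greatest_of_bdd
    ⟨l, fun k hk => hΔ.strictMono_zpow.le_iff_le.1 (hk.trans hl)⟩ (hΔ.exists_zpow_le x)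
  exact ⟨k, hk, hmax⟩

theorem transport_inf (p : ℤ) (z c d : G) :
    transport Δ p z (c ⊓ d) = transport Δ p z c ⊓ transport Δ p z d := by
  have hmul := hΔ.inf_mul_zpow 1 c d
  rw [zpow_one] at hmul
  simp only [transport, mul_assoc (initialFactor Δ p z)⁻¹, mul_initialFactor_conj]
  rw [mul_inf_of_mulLeftMono z, hΔ.inf_mul_zpow, hmul, ← mul_inf_of_mulLeftMono, inf_inf_inf_comm]

theorem transport_zpow (p k : ℤ) (z : G) : transport Δ p z (Δ ^ k) = Δ ^ k := by
  have h : z * Δ ^ k * Δ ^ (-p) ⊓ Δ ^ k * Δ = initialFactor Δ p z * Δ ^ k := by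
    rw [initialFactor, hΔ.inf_mul_zpow]
    group
  rw [transport, mul_assoc, mul_initialFactor_conj, h, inv_mul_cancel_left]

theorem transport_mono (p : ℤ) (z : G) : Monotone (transport Δ p z) :=
  Monotone.of_map_inf (hΔ.transport_inf p z)

theorem iterTransport_inf (p : ℤ) (N : ℕ) (z c d : G) :
    iterTransport Δ p N z (c ⊓ d) = iterTransport Δ p N z c ⊓ iterTransport Δ p N z d := by
  induction N generalizing z c d with
  | zero => rfl
  | succ N ih => rw [iterTransport, hΔ.transport_inf, ih]; rfl

theorem iterTransport_zpow (p : ℤ) (N : ℕ) (k : ℤ) (z : G) :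
    iterTransport Δ p N z (Δ ^ k) = Δ ^ k := by
  induction N generalizing z with
  | zero => rfl
  | succ N ih => rw [iterTransport, hΔ.transport_zpow, ih]

theorem cyclingAt_conj_zpow (p k : ℤ) (z : G) :
    cyclingAt Δ p ((Δ ^ k)⁻¹ * z * Δ ^ k) = (Δ ^ k)⁻¹ * cyclingAt Δ p z * Δ ^ k := by
  rw [← conj_transport_cyclingAt, hΔ.transport_zpow]

theorem mem_periodicPts_iterTransport {p : ℤ} {N : ℕ} {y a : G}
    (hy : Function.IsPeriodicPt (cyclingAt Δ p) N y)
    (ha : Function.IsPeriodicPt (cyclingAt Δ p) N (a⁻¹ * y * a)) :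
    a ∈ Function.periodicPts (iterTransport Δ p N y) := by
  obtain ⟨k, hk⟩ := hΔ.exists_zpow_le a
  obtain ⟨l, hl⟩ := hΔ.exists_le_zpow a
  let S := {c | c⁻¹ * y * c = a⁻¹ * y * a} ∩ Set.Icc (Δ ^ k) (Δ ^ l)
  have hmono : Monotone (iterTransport Δ p N y) :=
    Monotone.of_map_inf (hΔ.iterTransport_inf p N y)
  have hmaps : Set.MapsTo (iterTransport Δ p N y) S S := by
    rintro c ⟨hc, hkc, hcl⟩
    refine ⟨?_, ?_, ?_⟩
    · have h := conj_iterTransport_cyclingAt_iterate Δ p N y c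
      rwa [hy.eq, show c⁻¹ * y * c = _ from hc, ha.eq] at h
    · exact hΔ.iterTransport_zpow p N k y ▸ hmono hkc
    · exact hΔ.iterTransport_zpow p N l y ▸ hmono hcl
  have : Finite S := ((hΔ.finite_Icc _ _).inter_of_right _).to_subtype
  have hinj : Function.Injective (hmaps.restrict _ S S) :=
    hmaps.restrict_inj.2 ((iterTransport_injOn Δ p N y _).mono Set.inter_subset_left)
  have hval : Function.Semiconj Subtype.val (hmaps.restrict _ S S) (iterTransport Δ p N y) :=
    fun _ => rfl
  exact hval.mapsTo_periodicPts (hinj.mem_periodicPts ⟨a, rfl, hk, hl⟩)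

theorem conj_inf_mem_periodicPts_cyclingAt {p : ℤ} {y a b : G}
    (hy : y ∈ Function.periodicPts (cyclingAt Δ p))
    (ha : a⁻¹ * y * a ∈ Function.periodicPts (cyclingAt Δ p))
    (hb : b⁻¹ * y * b ∈ Function.periodicPts (cyclingAt Δ p)) :
    (a ⊓ b)⁻¹ * y * (a ⊓ b) ∈ Function.periodicPts (cyclingAt Δ p) := by
  obtain ⟨i, hi, hyi⟩ := hy
  obtain ⟨j, hj, haj⟩ := ha
  obtain ⟨k, hk, hbk⟩ := hb
  set N := i * j * k
  have hyN : Function.IsPeriodicPt (cyclingAt Δ p) N y := (hyi.mul_const j).mul_const k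
  have hinf := inf_mem_periodicPts (hΔ.iterTransport_inf p N y)
    (hΔ.mem_periodicPts_iterTransport hyN ((haj.const_mul i).mul_const k))
    (hΔ.mem_periodicPts_iterTransport hyN (hbk.const_mul (i * j)))
  have hconj : Function.Semiconj (fun c => c⁻¹ * y * c) (iterTransport Δ p N y)
      (cyclingAt Δ p)^[N] := fun c => by
    have h := conj_iterTransport_cyclingAt_iterate Δ p N y c
    rwa [hyN.eq] at h
  exact (mem_periodicPts_iterate_iff (Nat.mul_pos (Nat.mul_pos hi hj) hk)).1
    (hconj.mapsTo_periodicPts hinf)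

theorem zpow_le_cyclingAt {p : ℤ} {z : G} (hz : Δ ^ p ≤ z) : Δ ^ p ≤ cyclingAt Δ p z := by
  rw [cyclingAt, le_conj_iff_mul_le_mul]
  calc initialFactor Δ p z * Δ ^ p
      ≤ z * Δ ^ (-p) * Δ ^ p := (hΔ.mul_zpow_le_mul_zpow_iff p).2 inf_le_left
    _ = z := by rw [zpow_neg, inv_mul_cancel_right]
    _ ≤ z * initialFactor Δ p z := le_mul_of_one_le_right' (hΔ.one_le_initialFactor hz)

theorem zpow_le_conj_inf {p : ℤ} {y a b : G} (ha : Δ ^ p ≤ a⁻¹ * y * a)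
    (hb : Δ ^ p ≤ b⁻¹ * y * b) : Δ ^ p ≤ (a ⊓ b)⁻¹ * y * (a ⊓ b) := by
  rw [le_conj_iff_mul_le_mul] at ha hb ⊢
  rw [hΔ.inf_mul_zpow, mul_inf_of_mulLeftMono]
  exact inf_le_inf ha hb

/-- A conjugator `c` witnessing that the class contains larger infima grows under transport unless
`z` has a larger infimum, yet it remains below a fixed power of `Δ`. -/
theorem exists_zpow_succ_le_cyclingAt_iterate {p : ℤ} {z c : G}
    (hc : Δ ^ (p + 1) ≤ c⁻¹ * z * c) : ∃ i, Δ ^ (p + 1) ≤ (cyclingAt Δ p)^[i] z := by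
  obtain ⟨ℓ, hℓ⟩ := hΔ.exists_strictMono
  obtain ⟨k, hk⟩ := hΔ.exists_le_zpow c
  induction hm : (ℓ (Δ ^ k) / ℓ c).toAdd.toNat using Nat.strong_induction_on generalizing z c with
  | _ m ih =>
  by_cases hz : Δ ^ (p + 1) ≤ z
  · exact ⟨0, hz⟩
  have hfactor := hΔ.initialFactor_eq_self_iff.2 hc
  have hlt : initialFactor Δ p z < Δ :=
    lt_of_le_of_ne inf_le_right (mt hΔ.initialFactor_eq_self_iff.1 hz)
  have hgrow : (ℓ c).toAdd < (ℓ (transport Δ p z c)).toAdd := by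
    rw [Multiplicative.toAdd_lt, transport, hfactor, map_mul, map_mul, map_inv, mul_comm (ℓ _)⁻¹,
      mul_assoc, lt_mul_iff_one_lt_right', lt_inv_mul_iff_mul_lt, mul_one]
    exact hℓ hlt
  have hle : transport Δ p z c ≤ Δ ^ k := hΔ.transport_zpow p k z ▸ hΔ.transport_mono p z hk
  have hbound : (ℓ (transport Δ p z c)).toAdd ≤ (ℓ (Δ ^ k)).toAdd := hℓ.monotone hle
  have hlevel : Δ ^ (p + 1) ≤
      (transport Δ p z c)⁻¹ * cyclingAt Δ p z * transport Δ p z c := by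
    rw [conj_transport_cyclingAt, cyclingAt, hfactor, le_conj_iff_mul_le_mul, ← zpow_one_add,
      add_comm, zpow_add_one, hΔ.mul_le_mul_iff]
    exact hc
  obtain ⟨i, hi⟩ := ih _ (by
    rw [← hm, toAdd_div, toAdd_div]
    omega) hlevel hle rfl
  exact ⟨i + 1, hi⟩

end IsGarsideElement

section Inf

variable {Δ : G} (hΔ : IsGarsideElement Δ) {inf : G → ℤ}
  (hinf : GaloisConnection (fun k : ℤ => Δ ^ k) inf)
include hΔ hinf

theorem inf_le_inf_cycling (z : G) : inf z ≤ inf (cycling Δ inf z) :=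
  (hinf _ _).1 (hΔ.zpow_le_cyclingAt ((hinf _ _).2 le_rfl))

theorem inf_le_inf_cycling_iterate (i : ℕ) (z : G) : inf z ≤ inf ((cycling Δ inf)^[i] z) := by
  induction i generalizing z with
  | zero => rfl
  | succ i ih => exact (inf_le_inf_cycling hΔ hinf z).trans (ih _)

theorem IsSummit.inf_cycling_iterate {z : G} (hz : IsSummit inf z) (i : ℕ) :
    inf ((cycling Δ inf)^[i] z) = inf z := by
  refine le_antisymm (hz _ ?_) (inf_le_inf_cycling_iterate hΔ hinf i z)
  induction i with
  | zero => exact IsConj.refl z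
  | succ i ih =>
    rw [Function.iterate_succ_apply']
    exact ih.trans (isConj_conj _ _)

theorem IsSummit.mem_periodicPts_cycling_iff {z : G} (hz : IsSummit inf z) :
    z ∈ Function.periodicPts (cycling Δ inf) ↔
      z ∈ Function.periodicPts (cyclingAt Δ (inf z)) := by
  simp only [Function.mem_periodicPts, Function.IsPeriodicPt, Function.IsFixedPt,
    cycling_iterate_eq (hz.inf_cycling_iterate hΔ hinf)]

theorem inf_cycling_iterate_of_mem_periodicPts {z : G}
    (hz : z ∈ Function.periodicPts (cycling Δ inf)) (i : ℕ) :
    inf ((cycling Δ inf)^[i] z) = inf z := by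
  obtain ⟨M, hM, hper⟩ := hz
  refine le_antisymm ?_ (inf_le_inf_cycling_iterate hΔ hinf i z)
  have h := inf_le_inf_cycling_iterate hΔ hinf (M * i - i) ((cycling Δ inf)^[i] z)
  rwa [← Function.iterate_add_apply, Nat.sub_add_cancel (Nat.le_mul_of_pos_left i hM),
    (hper.mul_const i).eq] at h

theorem isSummit_of_mem_periodicPts {z : G} (hz : z ∈ Function.periodicPts (cycling Δ inf)) :
    IsSummit inf z := by
  intro w hw
  by_contra! hlt
  obtain ⟨c, rfl⟩ := isConj_iff.1 hw
  have hinf_iter := inf_cycling_iterate_of_mem_periodicPts hΔ hinf hz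
  obtain ⟨i, hi⟩ := hΔ.exists_zpow_succ_le_cyclingAt_iterate (p := inf z) (z := z) (c := c⁻¹) (by
    rw [inv_inv]
    exact (hinf _ _).2 hlt)
  rw [← cycling_iterate_eq hinf_iter] at hi
  exact ((hinf _ _).1 hi).not_gt (hinf_iter i ▸ lt_add_one _)

theorem IsSummit.conj_inf {y a b : G} (ha : IsSummit inf (a⁻¹ * y * a))
    (hb : IsSummit inf (b⁻¹ * y * b)) : IsSummit inf ((a ⊓ b)⁻¹ * y * (a ⊓ b)) := by
  have hab : inf (a⁻¹ * y * a) = inf (b⁻¹ * y * b) :=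
    ha.inf_eq hb ((isConj_conj y a).symm.trans (isConj_conj y b))
  intro w hw
  refine (ha w ((isConj_conj y a).symm.trans ((isConj_conj y _).trans hw))).trans ?_
  exact (hinf _ _).1 (hΔ.zpow_le_conj_inf ((hinf _ _).2 le_rfl) ((hinf _ _).2 hab.le))

theorem conj_inf_mem_periodicPts_cycling {y a b : G}
    (hy : y ∈ Function.periodicPts (cycling Δ inf))
    (ha : a⁻¹ * y * a ∈ Function.periodicPts (cycling Δ inf))
    (hb : b⁻¹ * y * b ∈ Function.periodicPts (cycling Δ inf)) :
    (a ⊓ b)⁻¹ * y * (a ⊓ b) ∈ Function.periodicPts (cycling Δ inf) := by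
  have hsy := isSummit_of_mem_periodicPts hΔ hinf hy
  have hsa := isSummit_of_mem_periodicPts hΔ hinf ha
  have hsb := isSummit_of_mem_periodicPts hΔ hinf hb
  have hsab := hsa.conj_inf hΔ hinf hsb
  rw [hsy.mem_periodicPts_cycling_iff hΔ hinf] at hy
  rw [hsa.mem_periodicPts_cycling_iff hΔ hinf, ← hsy.inf_eq hsa (isConj_conj y a)] at ha
  rw [hsb.mem_periodicPts_cycling_iff hΔ hinf, ← hsy.inf_eq hsb (isConj_conj y b)] at hb
  rw [hsab.mem_periodicPts_cycling_iff hΔ hinf, ← hsy.inf_eq hsab (isConj_conj y _)]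
  exact hΔ.conj_inf_mem_periodicPts_cyclingAt hy ha hb

theorem inf_conj_zpow (k : ℤ) (z : G) : inf ((Δ ^ k)⁻¹ * z * Δ ^ k) = inf z := by
  refine eq_of_forall_le_iff fun j => ?_
  rw [← hinf, ← hinf, le_conj_iff_mul_le_mul, ← zpow_add, add_comm, zpow_add,
    hΔ.mul_zpow_le_mul_zpow_iff]

theorem cycling_conj_zpow (k : ℤ) (z : G) :
    cycling Δ inf ((Δ ^ k)⁻¹ * z * Δ ^ k) = (Δ ^ k)⁻¹ * cycling Δ inf z * Δ ^ k := by
  rw [cycling, inf_conj_zpow hΔ hinf, hΔ.cyclingAt_conj_zpow, cycling]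

end Inf

end Cycling

section CentralLocalization

universe u

variable {M : Type u} [Monoid M] {δ : M}

/-- The powers of a central element of a left cancellative monoid form an Ore set. -/
abbrev centralOreSet [IsLeftCancelMul M] (hδ : ∀ x, Commute δ x) :
    OreLocalization.OreSet (Submonoid.powers δ) :=
  have hcomm : ∀ (s : Submonoid.powers δ) (x : M), s * x = x * s := by
    rintro ⟨_, k, rfl⟩ x
    exact (hδ x).pow_left k
  { ore_right_cancel := fun x y s h => ⟨s, by
      rw [hcomm, hcomm, h]⟩
    oreNum := fun x _ => x
    oreDenom := fun _ s => s
    ore_eq := fun x s => hcomm s x }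

theorem exists_injective_isUnit_of_dvd_central [IsLeftCancelMul M] (hδ : ∀ x, Commute δ x) :
    ∃ (K : Type u) (_ : Monoid K) (f : M →* K), Function.Injective f ∧
      ∀ s, s ∣ δ → IsUnit (f s) := by
  let := centralOreSet hδ
  refine ⟨OreLocalization (Submonoid.powers δ) M, inferInstance, OreLocalization.numeratorHom,
    fun x y h => ?_, ?_⟩
  · obtain ⟨u, v, huv, hu⟩ := OreLocalization.oreDiv_eq_iff.1 h
    simp only [OneMemClass.coe_one, mul_one] at hu
    rw [← hu] at huv
    exact (mul_left_cancel huv).symm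
  · rintro s ⟨y, rfl⟩
    have hsy : Commute s y := mul_left_cancel ((hδ s).eq.symm.trans (mul_assoc s y s))
    have hunit := OreLocalization.numerator_isUnit
      (⟨s * y, Submonoid.mem_powers _⟩ : Submonoid.powers (s * y))
    exact ((hsy.map OreLocalization.numeratorHom).isUnit_mul_iff.1
      (by rwa [← map_mul])).1

end CentralLocalization

namespace BraidGroup

variable {n : ℕ}

open ArtinMonoid

section PositiveMonoid

/-- The abstract monoid of positive braid words on `n` strands; it is identified with
`positives n` in `isPositive_iff_exists_toGroup_eq` and `toGroup_injective`. -/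
abbrev PositiveMonoid (n : ℕ) := ArtinMonoid (SimpleGraph.pathGraph (n - 1))

theorem pathGraph_cliqueFree_three (m : ℕ) : (SimpleGraph.pathGraph m).CliqueFree 3 :=
  (SimpleGraph.pathGraph.bicoloring m).colorable.cliqueFree (by decide)

instance : IsLeftCancelMul (PositiveMonoid n) :=
  ArtinMonoid.isLeftCancelMul (pathGraph_cliqueFree_three _)

/-- `gen` with a natural-number index (junk value `1` out of range), as in `σ'`. -/
def gen' (n i : ℕ) : PositiveMonoid n := if h : i < n - 1 then gen ⟨i, h⟩ else 1

theorem gen'_coe (i : Fin (n - 1)) : gen' n i = gen i := dif_pos i.2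

theorem isBraidSeq_gen' : IsBraidSeq (gen' n) (n - 1) where
  commute i j hij hj := by
    rw [gen', gen', dif_pos (by omega), dif_pos hj]
    exact gen_comm (by rw [Ne, Fin.mk.injEq]; omega)
      (by rw [SimpleGraph.pathGraph_adj]; dsimp only; omega)
  braid i hi := by
    rw [gen', gen', dif_pos (by omega), dif_pos hi]
    exact gen_braid (SimpleGraph.pathGraph_adj.2 (.inl rfl))

theorem semiconjBy_halfTwist_gen (i : Fin (n - 1)) :
    SemiconjBy (halfTwist (gen' n) (n - 1)) (gen i) (gen i.rev) := by
  have h := isBraidSeq_gen'.semiconjBy_halfTwist le_rfl i.2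
  rwa [show n - 1 - 1 - (i : ℕ) = i.rev by rw [Fin.val_rev]; omega, gen'_coe, gen'_coe] at h

theorem gen_dvd_halfTwist (i : Fin (n - 1)) : gen i ∣ halfTwist (gen' n) (n - 1) :=
  gen'_coe i ▸ isBraidSeq_gen'.dvd_halfTwist le_rfl i.2

theorem commute_halfTwist_sq (x : PositiveMonoid n) :
    Commute (halfTwist (gen' n) (n - 1) * halfTwist (gen' n) (n - 1)) x := by
  induction x using Submonoid.induction_of_closure_eq_top_left closure_range_gen with
  | one => exact Commute.one_right _
  | mul_left _ hi y ih =>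
    obtain ⟨i, rfl⟩ := hi
    refine Commute.mul_right ?_ ih
    have h := (semiconjBy_halfTwist_gen i.rev).mul_left (semiconjBy_halfTwist_gen i)
    rwa [Fin.rev_rev] at h

theorem σ_comm {i j : Fin (n - 1)} (hij : (i : ℕ) + 1 < j) : σ i * σ j = σ j * σ i := by
  have h := PresentedGroup.one_of_mem (rels := braidRels n) (.inl ⟨i, j, hij, rfl⟩)
  rwa [map_mul, map_mul, map_inv, map_inv, mul_inv_eq_one, mul_inv_eq_iff_eq_mul, map_mul] at h

theorem σ_braid {i j : Fin (n - 1)} (hij : (i : ℕ) + 1 = j) :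
    σ i * σ j * σ i = σ j * σ i * σ j := by
  have h := PresentedGroup.one_of_mem (rels := braidRels n) (.inr ⟨i, j, hij, rfl⟩)
  rwa [map_mul, map_inv, mul_inv_eq_one] at h

/-- The comparison map from positive braid words to braids. -/
def toGroup (n : ℕ) : PositiveMonoid n →* BraidGroup n :=
  PresentedMonoid.lift σ fun _ _ h => by
    cases h with
    | comm hne hij =>
      simp only [map_mul, FreeMonoid.lift_eval_of]
      rw [SimpleGraph.pathGraph_adj] at hij
      rcases lt_or_gt_of_ne (Fin.val_ne_of_ne hne) with h | h
      · exact σ_comm (by omega)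
      · exact (σ_comm (by omega)).symm
    | braid hij =>
      simp only [map_mul, FreeMonoid.lift_eval_of]
      rcases SimpleGraph.pathGraph_adj.1 hij with h | h
      · exact σ_braid h
      · exact (σ_braid h).symm

theorem toGroup_gen (i : Fin (n - 1)) : toGroup n (gen i) = σ i := rfl

theorem exists_units_lift {K : Type*} [Monoid K] (f : PositiveMonoid n →* K)
    (hf : ∀ i, IsUnit (f (gen i))) :
    ∃ g : BraidGroup n →* Kˣ, ∀ i, (g (σ i) : K) = f (gen i) := by
  refine ⟨PresentedGroup.toGroup (f := fun i => (hf i).unit) ?_, fun i => ?_⟩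
  · rintro _ (⟨i, j, hij, rfl⟩ | ⟨i, j, hij, rfl⟩)
    · simp only [map_mul, map_inv, FreeGroup.lift_apply_of]
      rw [mul_inv_eq_one, mul_inv_eq_iff_eq_mul, Units.ext_iff]
      simp only [Units.val_mul, IsUnit.unit_spec, ← map_mul]
      rw [gen_comm (fun h => by rw [h] at hij; omega) (by rw [SimpleGraph.pathGraph_adj]; omega)]
    · simp only [map_mul, map_inv, FreeGroup.lift_apply_of]
      rw [mul_inv_eq_one, Units.ext_iff]
      simp only [Units.val_mul, IsUnit.unit_spec, ← map_mul]
      rw [gen_braid (SimpleGraph.pathGraph_adj.2 (.inl hij))]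
  · rw [σ, PresentedGroup.toGroup.of, IsUnit.unit_spec]

theorem toGroup_injective : Function.Injective (toGroup n) := by
  obtain ⟨K, _, f, hf, hunit⟩ :=
    exists_injective_isUnit_of_dvd_central (commute_halfTwist_sq (n := n))
  obtain ⟨g, hg⟩ := exists_units_lift f fun i =>
    hunit _ ((gen_dvd_halfTwist i).trans (dvd_mul_right _ _))
  have hcomp : ((Units.coeHom K).comp g).comp (toGroup n) = f := PresentedMonoid.ext _ hg
  exact Function.Injective.of_comp (f := fun x => (g x : K)) (by
    rw [← hcomp] at hf; exact hf)

theorem isPositive_iff_exists_toGroup_eq {x : BraidGroup n} :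
    IsPositive x ↔ ∃ y, toGroup n y = x := by
  rw [IsPositive, positives, show σ = toGroup n ∘ gen from rfl, Set.range_comp,
    ← MonoidHom.map_mclosure, closure_range_gen, Submonoid.mem_map]
  simp only [Submonoid.mem_top, true_and]

theorem leftDvd_iff_exists_mul_toGroup {x y : BraidGroup n} :
    LeftDvd x y ↔ ∃ p, x * toGroup n p = y := by
  simp only [LeftDvd, isPositive_iff_exists_toGroup_eq, exists_exists_eq_and]

theorem toGroup_halfTwist : toGroup n (halfTwist (gen' n) (n - 1)) = Δ n := by
  have hgen : toGroup n ∘ gen' n = σ' n := by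
    funext i
    simp only [Function.comp_apply, gen', σ', apply_dite (toGroup n), toGroup_gen, map_one]
  rw [map_halfTwist, hgen]
  rfl

theorem semiconjBy_Δ_σ (i : Fin (n - 1)) : SemiconjBy (Δ n) (σ i) (σ i.rev) :=
  toGroup_halfTwist (n := n) ▸ (semiconjBy_halfTwist_gen i).map (toGroup n)

theorem commute_Δ_mul_Δ (x : BraidGroup n) : Commute (Δ n * Δ n) x := by
  have hle : Subgroup.closure (Set.range σ) ≤ Subgroup.centralizer {Δ n * Δ n} := by
    rw [Subgroup.closure_le]
    rintro _ ⟨i, rfl⟩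
    have h := (semiconjBy_Δ_σ i.rev).mul_left (semiconjBy_Δ_σ i)
    rw [Fin.rev_rev] at h
    exact Subgroup.mem_centralizer_singleton_iff.2 h.eq.symm
  exact Eq.symm <| Subgroup.mem_centralizer_singleton_iff.1
    (hle ((PresentedGroup.closure_range_of (braidRels n)).symm ▸ Subgroup.mem_top x))

theorem isPositive_Δ : IsPositive (Δ n) := isPositive_iff_exists_toGroup_eq.2 ⟨_, toGroup_halfTwist⟩

theorem σ_leftDvd_Δ (i : Fin (n - 1)) : LeftDvd (σ i) (Δ n) := by
  obtain ⟨y, hy⟩ := gen_dvd_halfTwist i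
  exact leftDvd_iff_exists_mul_toGroup.2 ⟨y, by rw [← toGroup_halfTwist, hy, map_mul, toGroup_gen]⟩

theorem exists_isLeftGcd (u v : PositiveMonoid n) : ∃ d, IsLeftGcd u v d := by
  refine exists_isLeftGcd_of_atoms closure_range_gen (ℓ := lengthHom) ?_ ?_ u v
  · rintro _ ⟨i, rfl⟩
    exact Nat.one_pos
  · rintro _ ⟨i, rfl⟩ _ ⟨j, rfl⟩ m - -
    exact ⟨_, isRightLcm_gen_gen (pathGraph_cliqueFree_three _) i j⟩

end PositiveMonoid

section PrefixOrder

theorem isPositive_σ (i : Fin (n - 1)) : IsPositive (σ i : BraidGroup n) :=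
  Submonoid.subset_closure ⟨i, rfl⟩

theorem exists_isPositive_Δ_mul_Δ_pow_mul (g : BraidGroup n) :
    ∃ k : ℕ, IsPositive ((Δ n * Δ n) ^ k * g) := by
  have hg : g ∈ Subgroup.closure (Set.range (σ (n := n))) :=
    (PresentedGroup.closure_range_of (braidRels n)).symm ▸ Subgroup.mem_top g
  induction hg using Subgroup.closure_induction'' with
  | mem _ h =>
    obtain ⟨i, rfl⟩ := h
    exact ⟨0, by rw [pow_zero, one_mul]; exact isPositive_σ i⟩
  | inv_mem _ h =>
    obtain ⟨i, rfl⟩ := h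
    obtain ⟨p, hp, hΔ⟩ := σ_leftDvd_Δ i
    refine ⟨1, ?_⟩
    rw [pow_one, (commute_Δ_mul_Δ _).eq, ← mul_assoc, ← eq_inv_mul_iff_mul_eq.2 hΔ]
    exact Submonoid.mul_mem _ hp isPositive_Δ
  | one => exact ⟨0, by rw [pow_zero, one_mul]; exact Submonoid.one_mem _⟩
  | mul a b _ _ ha hb =>
    obtain ⟨k, hk⟩ := ha
    obtain ⟨l, hl⟩ := hb
    refine ⟨k + l, ?_⟩
    have hcomm := (commute_Δ_mul_Δ a).pow_left l
    rw [pow_add, mul_assoc, ← mul_assoc _ a, hcomm.eq, mul_assoc a, ← mul_assoc]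
    exact Submonoid.mul_mem _ hk hl

/-- The exponent sum of a braid word, i.e. the abelianization of the braid group. -/
def exponentSum (n : ℕ) : BraidGroup n →* Multiplicative ℤ :=
  PresentedGroup.toGroup (f := fun _ => Multiplicative.ofAdd 1) (by
    rintro _ (⟨i, j, -, rfl⟩ | ⟨i, j, -, rfl⟩) <;>
      simp only [map_mul, map_inv, FreeGroup.lift_apply_of, mul_inv_cancel_right, mul_inv_cancel])

theorem exponentSum_σ (i : Fin (n - 1)) : exponentSum n (σ i) = Multiplicative.ofAdd 1 :=
  PresentedGroup.toGroup.of _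

theorem IsPositive.exists_list_prod_eq {x : BraidGroup n} (hx : IsPositive x) :
    ∃ l : List (Fin (n - 1)), (l.map σ).prod = x ∧
      exponentSum n x = Multiplicative.ofAdd (l.length : ℤ) := by
  induction hx using Submonoid.closure_induction_left with
  | one => exact ⟨[], rfl, map_one _⟩
  | mul_left _ hi y _ ih =>
    obtain ⟨i, rfl⟩ := hi
    obtain ⟨l, rfl, hl⟩ := ih
    refine ⟨i :: l, rfl, ?_⟩
    rw [map_mul, hl, exponentSum_σ, List.length_cons, Nat.cast_succ, add_comm, ofAdd_add]

theorem LeftDvd.exponentSum_lt {x y : BraidGroup n} (h : LeftDvd x y) (hne : x ≠ y) :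
    exponentSum n x < exponentSum n y := by
  obtain ⟨p, hp, rfl⟩ := h
  obtain ⟨l, rfl, hl⟩ := hp.exists_list_prod_eq
  rw [map_mul, hl, lt_mul_iff_one_lt_right', ← ofAdd_zero, Multiplicative.ofAdd_lt]
  refine Int.natCast_pos.2 (List.length_pos_iff.2 ?_)
  rintro rfl
  exact hne (mul_one x).symm

theorem exists_leftDvd_iff_and (x y : BraidGroup n) :
    ∃ z, ∀ c, LeftDvd c z ↔ LeftDvd c x ∧ LeftDvd c y := by
  simp only [leftDvd_iff_exists_mul_toGroup]
  refine exists_meet_of_leftFractions exists_isLeftGcd toGroup_injective (fun g => ?_) x y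
  obtain ⟨k, hk⟩ := exists_isPositive_Δ_mul_Δ_pow_mul g
  obtain ⟨m, hm⟩ := isPositive_iff_exists_toGroup_eq.1 hk
  refine ⟨(halfTwist (gen' n) (n - 1) * halfTwist (gen' n) (n - 1)) ^ k, m, ?_⟩
  rw [map_pow, map_mul, toGroup_halfTwist, hm]

theorem leftDvd_refl (x : BraidGroup n) : LeftDvd x x := ⟨1, Submonoid.one_mem _, mul_one x⟩

noncomputable instance : SemilatticeInf (BraidGroup n) where
  le := LeftDvd
  le_refl := leftDvd_refl
  le_trans := by
    rintro x _ _ ⟨p, hp, rfl⟩ ⟨q, hq, rfl⟩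
    exact ⟨p * q, Submonoid.mul_mem _ hp hq, (mul_assoc x p q).symm⟩
  le_antisymm x y hxy hyx := by
    by_contra hne
    exact lt_asymm (hxy.exponentSum_lt hne) (hyx.exponentSum_lt (Ne.symm hne))
  inf x y := (exists_leftDvd_iff_and x y).choose
  inf_le_left x y := (((exists_leftDvd_iff_and x y).choose_spec _).1 (leftDvd_refl _)).1
  inf_le_right x y := (((exists_leftDvd_iff_and x y).choose_spec _).1 (leftDvd_refl _)).2
  le_inf _ x y hx hy := ((exists_leftDvd_iff_and x y).choose_spec _).2 ⟨hx, hy⟩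

instance : MulLeftMono (BraidGroup n) where
  elim := by
    rintro g x _ ⟨p, hp, rfl⟩
    exact ⟨p, hp, mul_assoc g x p⟩

theorem one_le_iff_isPositive {x : BraidGroup n} : 1 ≤ x ↔ IsPositive x := by
  constructor
  · rintro ⟨p, hp, rfl⟩
    rwa [one_mul]
  · exact fun hx => ⟨x, hx, one_mul x⟩

theorem leftMeet_eq_inf {a b : BraidGroup n} (ha : IsPositive a) (hb : IsPositive b) :
    leftMeet a b = a ⊓ b := by
  have hab : IsPositive (a ⊓ b) :=
    one_le_iff_isPositive.1 (le_inf (one_le_iff_isPositive.2 ha) (one_le_iff_isPositive.2 hb))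
  obtain ⟨-, hma, hmb, hm⟩ : IsPositive (leftMeet a b) ∧ leftMeet a b ≤ a ∧ leftMeet a b ≤ b ∧
      ∀ c, IsPositive c → c ≤ a → c ≤ b → c ≤ leftMeet a b :=
    Classical.epsilon_spec (p := fun m => IsPositive m ∧ m ≤ a ∧ m ≤ b ∧
      ∀ c, IsPositive c → c ≤ a → c ≤ b → c ≤ m)
      ⟨a ⊓ b, hab, inf_le_left, inf_le_right, fun _ _ => le_inf⟩
  exact le_antisymm (le_inf hma hmb) (hm _ hab inf_le_left inf_le_right)

theorem strictMono_exponentSum : StrictMono (exponentSum n) :=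
  fun _ _ h => LeftDvd.exponentSum_lt h.le h.ne

theorem finite_Icc (x y : BraidGroup n) : (Set.Icc x y).Finite := by
  refine ((List.finite_length_le (Fin (n - 1))
    (exponentSum n (x⁻¹ * y)).toAdd.toNat).image fun l => x * (l.map σ).prod).subset ?_
  rintro _ ⟨⟨p, hp, rfl⟩, hy⟩
  obtain ⟨l, rfl, hl⟩ := hp.exists_list_prod_eq
  refine ⟨l, ?_, rfl⟩
  have hle := strictMono_exponentSum.monotone (le_inv_mul_iff_mul_le.2 hy)
  rw [hl] at hle
  exact Int.ofNat_le.1 (le_trans hle (Int.self_le_toNat _))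

theorem IsPositive.exists_Δ_mul_eq {p : BraidGroup n} (hp : IsPositive p) :
    ∃ q, IsPositive q ∧ Δ n * q = p * Δ n := by
  induction hp using Submonoid.closure_induction with
  | mem _ hi =>
    obtain ⟨i, rfl⟩ := hi
    have h := semiconjBy_Δ_σ i.rev
    rw [Fin.rev_rev] at h
    exact ⟨σ i.rev, isPositive_σ _, h.eq⟩
  | one => exact ⟨1, Submonoid.one_mem _, (Commute.one_right _).eq⟩
  | mul x y _ _ hx hy =>
    obtain ⟨x', hx', hxΔ⟩ := hx
    obtain ⟨y', hy', hyΔ⟩ := hy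
    refine ⟨x' * y', Submonoid.mul_mem _ hx' hy', ?_⟩
    rw [← mul_assoc, hxΔ, mul_assoc, hyΔ, mul_assoc]

theorem mul_Δ_le_mul_Δ_iff {x y : BraidGroup n} : x * Δ n ≤ y * Δ n ↔ x ≤ y := by
  have hmono : ∀ {x y : BraidGroup n}, x ≤ y → x * Δ n ≤ y * Δ n := by
    rintro x _ ⟨p, hp, rfl⟩
    obtain ⟨q, hq, hpq⟩ := hp.exists_Δ_mul_eq
    exact ⟨q, hq, by rw [mul_assoc, hpq, mul_assoc]⟩
  refine ⟨fun h => ?_, hmono⟩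
  have h' := hmono h
  rwa [mul_assoc, mul_assoc, ← (commute_Δ_mul_Δ x).eq, ← (commute_Δ_mul_Δ y).eq,
    mul_le_mul_iff_left] at h'

theorem exists_le_Δ_zpow (x : BraidGroup n) : ∃ k : ℤ, x ≤ Δ n ^ k := by
  obtain ⟨k, hk⟩ := exists_isPositive_Δ_mul_Δ_pow_mul x⁻¹
  refine ⟨2 * k, ?_⟩
  rw [((commute_Δ_mul_Δ x⁻¹).pow_left k).eq, ← one_le_iff_isPositive, le_inv_mul_iff_le] at hk
  rwa [zpow_mul, zpow_two, zpow_natCast]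

end PrefixOrder

section WeightedForm

theorem isGarsideElement_Δ : IsGarsideElement (Δ n) where
  one_le := one_le_iff_isPositive.2 isPositive_Δ
  mul_le_mul_iff := mul_Δ_le_mul_Δ_iff
  exists_le_zpow := exists_le_Δ_zpow
  finite_Icc := finite_Icc
  exists_strictMono := ⟨exponentSum n, strictMono_exponentSum⟩

/-- Conjugation by `Δ ^ k`, which preserves the prefix order. -/
def conjΔ (k : ℤ) : BraidGroup n ≃*o BraidGroup n where
  toMulEquiv := MulAut.conj (Δ n ^ k)
  map_le_map_iff' := by
    intro x y
    change Δ n ^ k * x * (Δ n ^ k)⁻¹ ≤ Δ n ^ k * y * (Δ n ^ k)⁻¹ ↔ x ≤ y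
    rw [← zpow_neg, isGarsideElement_Δ.mul_zpow_le_mul_zpow_iff, mul_le_mul_iff_left]

theorem conjΔ_apply (k : ℤ) (x : BraidGroup n) : conjΔ k x = Δ n ^ k * x * (Δ n ^ k)⁻¹ := rfl

theorem conjΔ_Δ (k : ℤ) : conjΔ k (Δ n) = Δ n := by
  rw [conjΔ_apply]
  group

theorem conjΔ_even {k : ℤ} (hk : Even k) (x : BraidGroup n) : conjΔ k x = x := by
  obtain ⟨m, rfl⟩ := hk
  rw [conjΔ_apply, zpow_add, ← (Commute.refl (Δ n)).mul_zpow,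
    ((commute_Δ_mul_Δ x).zpow_left m).eq, mul_inv_cancel_right]

theorem conjΔ_one_conjΔ_one (x : BraidGroup n) : conjΔ 1 (conjΔ 1 x) = x := by
  simp only [conjΔ_apply, zpow_one]
  rw [← mul_assoc, ← mul_assoc, (commute_Δ_mul_Δ x).eq, mul_assoc, mul_assoc, mul_assoc,
    mul_inv_cancel_left, mul_inv_cancel, mul_one]

theorem τ_eq_conjΔ_one (x : BraidGroup n) : τ n x = conjΔ 1 x := by
  have hσ (i : Fin (n - 1)) : MulAut.conj (Δ n ^ (1 : ℤ)) (σ i) = σ i.rev := by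
    rw [zpow_one, MulAut.conj_apply, (semiconjBy_Δ_σ i).eq, mul_inv_cancel_right]
  have hτ : ∀ i : Fin (n - 1), τ n (σ i) = σ i.rev :=
    Classical.epsilon_spec (p := fun f : BraidGroup n →* BraidGroup n =>
      ∀ i : Fin (n - 1), f (σ i) = σ i.rev) ⟨(MulAut.conj (Δ n ^ (1 : ℤ))).toMonoidHom, hσ⟩
  have heq : τ n = (MulAut.conj (Δ n ^ (1 : ℤ))).toMonoidHom :=
    PresentedGroup.ext fun i => (hτ i).trans (hσ i).symm
  rw [heq]
  rfl

theorem τpow_eq_conjΔ (k : ℤ) (x : BraidGroup n) : τpow k x = conjΔ k x := by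
  rw [τpow]
  split_ifs with hk
  · exact (conjΔ_even hk x).symm
  · obtain ⟨m, rfl⟩ := Int.not_even_iff_odd.1 hk
    calc τ n x = conjΔ 1 (conjΔ (2 * m) x) := by rw [τ_eq_conjΔ_one, conjΔ_even (even_two_mul m)]
      _ = conjΔ (2 * m + 1) x := by
        simp only [conjΔ_apply]
        group

theorem one_lt_σ (i : Fin (n - 1)) : 1 < (σ i : BraidGroup n) := by
  refine lt_of_le_of_ne (one_le_iff_isPositive.2 (isPositive_σ i)) fun h => ?_
  have hσ := exponentSum_σ i
  rw [← h, map_one, ← ofAdd_zero] at hσ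
  exact zero_ne_one (Multiplicative.ofAdd.injective hσ)

theorem eq_one_iff_forall_not_σ_le {x : BraidGroup n} (hx : 1 ≤ x) :
    x = 1 ↔ ∀ i, ¬ σ i ≤ x := by
  refine ⟨fun h i hi => (one_lt_σ i).not_ge (h ▸ hi), fun h => ?_⟩
  obtain ⟨l, rfl, -⟩ := (one_le_iff_isPositive.1 hx).exists_list_prod_eq
  cases l with
  | nil => rfl
  | cons i l =>
    refine absurd ⟨(l.map σ).prod, ?_, rfl⟩ (h i)
    exact Submonoid.list_prod_mem _ (List.forall_mem_map.2 fun j _ => isPositive_σ j)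

theorem one_lt_inf_Δ {x : BraidGroup n} (hx : 1 < x) : 1 < x ⊓ Δ n := by
  refine lt_of_le_of_ne (le_inf hx.le isGarsideElement_Δ.one_le) fun h => hx.ne' ?_
  refine (eq_one_iff_forall_not_σ_le hx.le).2 fun i hi => (one_lt_σ i).not_ge ?_
  exact h ▸ le_inf hi (σ_leftDvd_Δ i)

theorem isPermBraid_and_ne_iff {a : BraidGroup n} :
    IsPermBraid a ∧ a ≠ 1 ∧ a ≠ Δ n ↔ a ∈ Set.Ioo 1 (Δ n) := by
  rw [Set.mem_Ioo, lt_iff_le_and_ne, lt_iff_le_and_ne, one_le_iff_isPositive, IsPermBraid,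
    ne_comm (a := a) (b := 1)]
  exact and_and_and_comm

theorem isLeftWeighted_iff_inf_eq_one {a b : BraidGroup n} (ha : a ≤ Δ n) (hb : 1 ≤ b) :
    IsLeftWeighted a b ↔ a⁻¹ * Δ n ⊓ b = 1 := by
  rw [eq_one_iff_forall_not_σ_le (le_inf (le_inv_mul_iff_le.2 ha) hb)]
  exact forall_congr' fun i => not_congr (le_inf_iff (α := BraidGroup n)).symm

theorem isLeftWeighted_iff_mul_inf_eq {a b : BraidGroup n} (ha : a ≤ Δ n) (hb : 1 ≤ b) :
    IsLeftWeighted a b ↔ a * b ⊓ Δ n = a := by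
  rw [isLeftWeighted_iff_inf_eq_one ha hb, ← mul_right_inj a, mul_inf_of_mulLeftMono,
    mul_inv_cancel_left, mul_one, inf_comm]

theorem IsLeftWeighted.mono_right {a b c : BraidGroup n} (h : IsLeftWeighted a c) (hbc : b ≤ c) :
    IsLeftWeighted a b :=
  fun i hi => h i ⟨hi.1, (show σ i ≤ b from hi.2).trans hbc⟩

theorem one_le_prod {L : List (BraidGroup n)} (h : ∀ a ∈ L, a ∈ Set.Ioo 1 (Δ n)) : 1 ≤ L.prod :=
  one_le_iff_isPositive.2
    (Submonoid.list_prod_mem _ fun a ha => one_le_iff_isPositive.1 (h a ha).1.le)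

theorem prod_inf_Δ {L : List (BraidGroup n)} (h : ∀ a ∈ L, a ∈ Set.Ioo 1 (Δ n))
    (hchain : L.IsChain IsLeftWeighted) : L.prod ⊓ Δ n = L.head?.getD 1 := by
  induction L with
  | nil => exact inf_eq_left.2 isGarsideElement_Δ.one_le
  | cons a L ih =>
    obtain ⟨ha, hL⟩ := List.forall_mem_cons.1 h
    have hweighted : IsLeftWeighted a L.prod := by
      have hhead := ih hL hchain.tail
      cases L with
      | nil => exact fun i hi => (one_lt_σ i).not_ge (show σ i ≤ (1 : BraidGroup n) from hi.2)
      | cons b L =>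
        rintro i ⟨hia, hiL⟩
        have hib : σ i ≤ (b :: L).prod ⊓ Δ n := le_inf hiL (σ_leftDvd_Δ i)
        rw [hhead] at hib
        exact (List.isChain_cons_cons.1 hchain).1 i ⟨hia, hib⟩
    rw [List.prod_cons]
    exact (isLeftWeighted_iff_mul_inf_eq ha.2.le (one_le_prod hL)).1 hweighted

theorem exists_isChain_isLeftWeighted_prod_eq {p : BraidGroup n} (hp : 1 ≤ p)
    (hpΔ : ¬ Δ n ≤ p) : ∃ L : List (BraidGroup n),
      (∀ a ∈ L, a ∈ Set.Ioo 1 (Δ n)) ∧ L.IsChain IsLeftWeighted ∧ L.prod = p := by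
  induction hm : (exponentSum n p).toAdd.toNat using Nat.strong_induction_on generalizing p with
  | _ m ih =>
  rcases hp.eq_or_lt with rfl | hp1
  · exact ⟨[], List.forall_mem_nil _, List.isChain_nil, rfl⟩
  set a := p ⊓ Δ n with ha
  have haΔ : a < Δ n := inf_lt_right.2 hpΔ
  have ha1 : 1 < a := one_lt_inf_Δ hp1
  obtain ⟨q, hq, hpq⟩ : a ≤ p := inf_le_left
  rw [← one_le_iff_isPositive] at hq
  have hqΔ : ¬ Δ n ≤ q := fun h => hpΔ <| calc
    Δ n = 1 * Δ n := (one_mul _).symm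
    _ ≤ a * Δ n := mul_Δ_le_mul_Δ_iff.2 ha1.le
    _ ≤ a * q := mul_le_mul_right h a
    _ = p := hpq
  have hlt : (exponentSum n q).toAdd.toNat < m := by
    have ha0 : 0 < (exponentSum n a).toAdd :=
      (map_one (exponentSum n)).symm.trans_lt (strictMono_exponentSum ha1)
    have hq0 : 0 ≤ (exponentSum n q).toAdd :=
      (map_one (exponentSum n)).symm.trans_le (strictMono_exponentSum.monotone hq)
    rw [← hm, ← hpq, map_mul, toAdd_mul]
    omega
  obtain ⟨L, hL, hchain, rfl⟩ := ih _ hlt hq hqΔ rfl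
  refine ⟨a :: L, List.forall_mem_cons.2 ⟨⟨ha1, haΔ⟩, hL⟩, ?_, hpq⟩
  have hweighted : IsLeftWeighted a L.prod :=
    (isLeftWeighted_iff_mul_inf_eq haΔ.le hq).2 (hpq.symm ▸ ha.symm)
  cases L with
  | nil => exact List.isChain_singleton a
  | cons b L =>
    refine List.isChain_cons_cons.2 ⟨hweighted.mono_right ?_, hchain⟩
    exact (prod_inf_Δ hL hchain).symm.trans_le inf_le_left

theorem isWeightedForm_iff {u : ℤ} {L : List (BraidGroup n)} {x : BraidGroup n} :
    IsWeightedForm u L x ↔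
      (∀ a ∈ L, a ∈ Set.Ioo 1 (Δ n)) ∧ L.IsChain IsLeftWeighted ∧ x = Δ n ^ u * L.prod := by
  simp only [IsWeightedForm, isPermBraid_and_ne_iff]
  rfl

theorem IsWeightedForm.conjΔ_head {u : ℤ} {L : List (BraidGroup n)} {x : BraidGroup n}
    (h : IsWeightedForm u L x) : conjΔ u (L.head?.getD 1) = initialFactor (Δ n) u x := by
  obtain ⟨hL, hchain, rfl⟩ := isWeightedForm_iff.1 h
  rw [← prod_inf_Δ hL hchain, map_inf, conjΔ_Δ, initialFactor, zpow_neg, conjΔ_apply]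

variable [Nontrivial (BraidGroup n)]

theorem exists_isWeightedForm (x : BraidGroup n) : ∃ u L, IsWeightedForm u L x := by
  obtain ⟨u, hu, hmax⟩ := isGarsideElement_Δ.exists_isGreatest_zpow_le x
  obtain ⟨L, hL, hchain, hprod⟩ := exists_isChain_isLeftWeighted_prod_eq
    (le_inv_mul_iff_le.2 hu) fun h => (lt_add_one u).not_ge <| hmax <| by
      rwa [le_inv_mul_iff_mul_le, ← zpow_add_one] at h
  exact ⟨u, L, isWeightedForm_iff.2 ⟨hL, hchain, by rw [hprod, mul_inv_cancel_left]⟩⟩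

theorem isWeightedForm_wf (x : BraidGroup n) : IsWeightedForm (wf x).1 (wf x).2 x := by
  obtain ⟨u, L, h⟩ := exists_isWeightedForm x
  exact Classical.epsilon_spec (p := fun q : ℤ × List (BraidGroup n) =>
    IsWeightedForm q.1 q.2 x) ⟨(u, L), h⟩

theorem IsWeightedForm.zpow_le_iff {u : ℤ} {L : List (BraidGroup n)} {x : BraidGroup n}
    (h : IsWeightedForm u L x) (k : ℤ) : Δ n ^ k ≤ x ↔ k ≤ u := by
  obtain ⟨hL, hchain, rfl⟩ := isWeightedForm_iff.1 h
  constructor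
  · contrapose!
    intro hk hle
    have hΔ : Δ n ≤ L.prod := by
      rw [← mul_le_mul_iff_left (Δ n ^ u), ← zpow_add_one]
      exact (isGarsideElement_Δ.strictMono_zpow.monotone hk).trans hle
    rw [← inf_eq_right, prod_inf_Δ hL hchain] at hΔ
    cases L with
    | nil => exact isGarsideElement_Δ.one_lt.ne hΔ
    | cons a L => exact (hL a List.mem_cons_self).2.ne hΔ
  · intro hk
    exact (isGarsideElement_Δ.strictMono_zpow.monotone hk).trans
      (le_mul_of_one_le_right' (one_le_prod hL))

theorem galoisConnection_binf : GaloisConnection (fun k : ℤ => Δ n ^ k) (binf (n := n)) :=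
  fun k x => (isWeightedForm_wf x).zpow_le_iff k

theorem IsWeightedForm.binf_eq {u : ℤ} {L : List (BraidGroup n)} {x : BraidGroup n}
    (h : IsWeightedForm u L x) : binf x = u :=
  eq_of_forall_le_iff fun k => (galoisConnection_binf k x).symm.trans (h.zpow_le_iff k)

theorem cyc_eq_cycling : cyc = cycling (Δ n) binf := by
  funext x
  rw [cyc, τpow_eq_conjΔ, bhead, binf, (isWeightedForm_wf x).conjΔ_head]
  rfl

end WeightedForm

section Inverse

/-- The factors of the left weighted form of `(Δ ^ u * L.prod)⁻¹`: conjugates of the complements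
`a⁻¹ * Δ` of the factors of `L`, in reverse order. -/
noncomputable def invFactors (u : ℤ) : List (BraidGroup n) → List (BraidGroup n)
  | [] => []
  | a :: L => invFactors (u + 1) L ++ [conjΔ (u + 1) (a⁻¹ * Δ n)]

theorem zpow_mul_prod_invFactors (u : ℤ) (L : List (BraidGroup n)) :
    Δ n ^ (-u - L.length) * (invFactors u L).prod = (Δ n ^ u * L.prod)⁻¹ := by
  induction L generalizing u with
  | nil => simp [invFactors]
  | cons a L ih =>
    have hexp : -u - ((a :: L).length : ℤ) = -(u + 1) - L.length := by
      rw [List.length_cons]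
      push_cast
      ring
    rw [invFactors, List.prod_append, List.prod_singleton, hexp, ← mul_assoc, ih, List.prod_cons,
      conjΔ_apply]
    group

theorem head?_invFactors (u : ℤ) (L : List (BraidGroup n)) :
    (invFactors u L).head? = L.getLast?.map fun t => conjΔ (u + L.length) (t⁻¹ * Δ n) := by
  induction L generalizing u with
  | nil => rfl
  | cons a L ih =>
    have hexp : u + ((a :: L).length : ℤ) = u + 1 + L.length := by
      rw [List.length_cons]
      push_cast
      ring
    rw [invFactors, List.head?_append, ih, hexp]
    cases L with
    | nil => rw [List.length_nil, Nat.cast_zero, add_zero]; rfl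
    | cons b L => rw [List.getLast?_cons_cons, List.getLast?_cons]; rfl

theorem inv_mul_Δ_mem_Ioo {a : BraidGroup n} (ha : a ∈ Set.Ioo 1 (Δ n)) :
    a⁻¹ * Δ n ∈ Set.Ioo 1 (Δ n) := by
  refine ⟨lt_inv_mul_iff_mul_lt.2 ((mul_one a).trans_lt ha.2), inv_mul_lt_iff_lt_mul.2 ?_⟩
  exact (one_mul (Δ n)).symm.trans_lt ((lt_iff_lt_of_le_iff_le' mul_Δ_le_mul_Δ_iff
    mul_Δ_le_mul_Δ_iff).2 ha.1)

theorem conjΔ_inv_mul_Δ_mem_Ioo {a : BraidGroup n} (ha : a ∈ Set.Ioo 1 (Δ n)) (k : ℤ) :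
    conjΔ k (a⁻¹ * Δ n) ∈ Set.Ioo 1 (Δ n) := by
  obtain ⟨h1, hΔ⟩ := inv_mul_Δ_mem_Ioo ha
  rw [← map_lt_map_iff (conjΔ k)] at h1 hΔ
  rw [map_one] at h1
  rw [conjΔ_Δ] at hΔ
  exact ⟨h1, hΔ⟩

theorem mem_Ioo_of_mem_invFactors {u : ℤ} {L : List (BraidGroup n)}
    (h : ∀ a ∈ L, a ∈ Set.Ioo 1 (Δ n)) : ∀ a ∈ invFactors u L, a ∈ Set.Ioo 1 (Δ n) := by
  induction L generalizing u with
  | nil => exact List.forall_mem_nil _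
  | cons a L ih =>
    obtain ⟨ha, hL⟩ := List.forall_mem_cons.1 h
    exact List.forall_mem_append.2
      ⟨ih hL, List.forall_mem_singleton.2 (conjΔ_inv_mul_Δ_mem_Ioo ha _)⟩

theorem IsLeftWeighted.conjΔ_inv_mul_Δ {a b : BraidGroup n} (ha : a ∈ Set.Ioo 1 (Δ n))
    (hb : b ∈ Set.Ioo 1 (Δ n)) (h : IsLeftWeighted a b) (u : ℤ) :
    IsLeftWeighted (conjΔ (u + 1) (b⁻¹ * Δ n)) (conjΔ u (a⁻¹ * Δ n)) := by
  have hcompl : (conjΔ (u + 1) (b⁻¹ * Δ n))⁻¹ * Δ n = conjΔ u b := by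
    rw [conjΔ_apply, conjΔ_apply]
    group
  rw [isLeftWeighted_iff_inf_eq_one (conjΔ_inv_mul_Δ_mem_Ioo hb _).2.le
    (conjΔ_inv_mul_Δ_mem_Ioo ha _).1.le, hcompl, ← map_inf, inf_comm,
    (isLeftWeighted_iff_inf_eq_one ha.2.le hb.1.le).1 h, map_one]

theorem isChain_invFactors {u : ℤ} {L : List (BraidGroup n)} (h : ∀ a ∈ L, a ∈ Set.Ioo 1 (Δ n))
    (hchain : L.IsChain IsLeftWeighted) : (invFactors u L).IsChain IsLeftWeighted := by
  induction L generalizing u with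
  | nil => exact List.isChain_nil
  | cons a L ih =>
    obtain ⟨ha, hL⟩ := List.forall_mem_cons.1 h
    refine List.isChain_append.2 ⟨ih hL hchain.tail, List.isChain_singleton _, ?_⟩
    cases L with
    | nil => exact fun _ hx => absurd hx (Option.not_mem_none _)
    | cons b L =>
      rw [invFactors, List.getLast?_concat, List.head?_singleton]
      rintro _ ⟨⟩ _ ⟨⟩
      exact (List.isChain_cons_cons.1 hchain).1.conjΔ_inv_mul_Δ ha (hL b List.mem_cons_self) _

theorem IsWeightedForm.inv {u : ℤ} {L : List (BraidGroup n)} {x : BraidGroup n}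
    (h : IsWeightedForm u L x) : IsWeightedForm (-u - L.length) (invFactors u L) x⁻¹ := by
  obtain ⟨hL, hchain, rfl⟩ := isWeightedForm_iff.1 h
  exact isWeightedForm_iff.2 ⟨mem_Ioo_of_mem_invFactors hL, isChain_invFactors hL hchain,
    (zpow_mul_prod_invFactors u L).symm⟩

variable [Nontrivial (BraidGroup n)]

theorem bsup_eq_neg_binf_inv (x : BraidGroup n) : bsup x = -binf x⁻¹ := by
  rw [(isWeightedForm_wf x).inv.binf_eq, bsup, binf, blen]
  ring

theorem decyc_eq_conjΔ_inv_cyc_inv (x : BraidGroup n) : decyc x = conjΔ 1 (cyc x⁻¹)⁻¹ := by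
  have h := isWeightedForm_wf x
  rw [cyc_eq_cycling, cycling, h.inv.binf_eq, cyclingAt, ← h.inv.conjΔ_head, head?_invFactors,
    decyc, btail]
  cases hlast : (wf x).2.getLast? with
  | none =>
    have hx := h.2.2
    rw [List.getLast?_eq_none_iff.1 hlast, List.prod_nil, mul_one] at hx
    rw [Option.map_none, Option.getD_none, map_one, hx, conjΔ_apply]
    group
  | some t =>
    rw [Option.map_some, Option.getD_some, Option.getD_some]
    simp only [conjΔ_apply]
    group

theorem cyc_conjΔ (k : ℤ) (x : BraidGroup n) : cyc (conjΔ k x) = conjΔ k (cyc x) := by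
  have h := cycling_conj_zpow isGarsideElement_Δ galoisConnection_binf (-k) x
  rwa [zpow_neg, inv_inv, ← cyc_eq_cycling] at h

theorem decyc_iterate_two (x : BraidGroup n) : decyc^[2] x = (cyc^[2] x⁻¹)⁻¹ := by
  change decyc (decyc x) = (cyc (cyc x⁻¹))⁻¹
  rw [decyc_eq_conjΔ_inv_cyc_inv, decyc_eq_conjΔ_inv_cyc_inv, ← map_inv, inv_inv, cyc_conjΔ,
    ← map_inv, conjΔ_one_conjΔ_one]

theorem mem_periodicPts_decyc_iff {x : BraidGroup n} :
    x ∈ Function.periodicPts decyc ↔ x⁻¹ ∈ Function.periodicPts cyc := by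
  rw [← mem_periodicPts_iterate_iff two_pos, ← mem_periodicPts_iterate_iff (f := cyc) two_pos]
  refine ⟨fun h => ?_, fun h => inv_inv x ▸ ?_⟩
  · exact Function.Semiconj.mapsTo_periodicPts (g := Inv.inv)
      (fun z => by rw [decyc_iterate_two, inv_inv]) h
  · exact Function.Semiconj.mapsTo_periodicPts (g := Inv.inv)
      (fun z => by rw [decyc_iterate_two, inv_inv]) h

end Inverse

section Convexity

theorem mem_SS_iff {x y : BraidGroup n} : y ∈ SS x ↔ IsConj x y ∧ IsSummit binf y :=
  and_congr_right fun h => ⟨fun hy w hw => hy w (h.trans hw), fun hy z hz => hy z (h.symm.trans hz)⟩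

variable [Nontrivial (BraidGroup n)]

theorem mem_SSS_iff {x y : BraidGroup n} :
    y ∈ SSS x ↔ IsConj x y ∧ IsSummit binf y ∧ IsSummit binf y⁻¹ := by
  have hinv : (∀ z, IsConj y z → bsup y ≤ bsup z) ↔ IsSummit binf y⁻¹ := by
    simp only [IsSummit, bsup_eq_neg_binf_inv, neg_le_neg_iff]
    rw [inv_surjective.forall (p := fun w => IsConj y⁻¹ w → binf w ≤ binf y⁻¹)]
    simp only [isConj_inv_inv_iff]
  rw [← hinv, ← and_assoc, ← mem_SS_iff]
  exact and_congr_right fun hy =>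
    ⟨fun h z hz => h z (hy.1.trans hz), fun h z hz => h z (hy.1.symm.trans hz)⟩

theorem mem_USS_iff {x y : BraidGroup n} :
    y ∈ USS x ↔ y ∈ SSS x ∧ y ∈ Function.periodicPts (cycling (Δ n) binf) := by
  rw [← cyc_eq_cycling]
  rfl

theorem mem_RSSS_iff {x y : BraidGroup n} :
    y ∈ RSSS x ↔ IsConj x y ∧ y ∈ Function.periodicPts (cycling (Δ n) binf) ∧
      y⁻¹ ∈ Function.periodicPts (cycling (Δ n) binf) := by
  rw [← cyc_eq_cycling, ← mem_periodicPts_decyc_iff]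
  rfl

theorem infClosed_conj_SS (x y : BraidGroup n) : InfClosed {a | a⁻¹ * y * a ∈ SS x} := by
  simp only [mem_SS_iff]
  rintro a ⟨hxa, ha⟩ b ⟨-, hb⟩
  exact ⟨(hxa.trans (isConj_conj y a).symm).trans (isConj_conj y _),
    ha.conj_inf isGarsideElement_Δ galoisConnection_binf hb⟩

theorem infClosed_conj_SSS (x y : BraidGroup n) : InfClosed {a | a⁻¹ * y * a ∈ SSS x} := by
  simp only [mem_SSS_iff, inv_conj]
  rintro a ⟨hxa, ha, ha'⟩ b ⟨-, hb, hb'⟩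
  exact ⟨(hxa.trans (isConj_conj y a).symm).trans (isConj_conj y _),
    ha.conj_inf isGarsideElement_Δ galoisConnection_binf hb,
    ha'.conj_inf isGarsideElement_Δ galoisConnection_binf hb'⟩

theorem infClosed_conj_USS {x y : BraidGroup n} (hy : y ∈ USS x) :
    InfClosed {a | a⁻¹ * y * a ∈ USS x} := by
  simp only [mem_USS_iff] at hy ⊢
  rintro a ⟨ha, ha'⟩ b ⟨hb, hb'⟩
  exact ⟨infClosed_conj_SSS x y ha hb,
    conj_inf_mem_periodicPts_cycling isGarsideElement_Δ galoisConnection_binf hy.2 ha' hb'⟩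

theorem infClosed_conj_RSSS {x y : BraidGroup n} (hy : y ∈ RSSS x) :
    InfClosed {a | a⁻¹ * y * a ∈ RSSS x} := by
  simp only [mem_RSSS_iff, inv_conj] at hy ⊢
  obtain ⟨hxy, hper, hper'⟩ := hy
  rintro a ⟨-, ha, ha'⟩ b ⟨-, hb, hb'⟩
  exact ⟨hxy.trans (isConj_conj y _),
    conj_inf_mem_periodicPts_cycling isGarsideElement_Δ galoisConnection_binf hper ha hb,
    conj_inf_mem_periodicPts_cycling isGarsideElement_Δ galoisConnection_binf hper' ha' hb'⟩

end Convexity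

theorem isPermBraid_iff_mem_Icc {a : BraidGroup n} : IsPermBraid a ↔ a ∈ Set.Icc 1 (Δ n) :=
  and_congr_left' one_le_iff_isPositive.symm

theorem convexity_of_invariant_sets_general (n : ℕ) (x : BraidGroup n)
    (P : Set (BraidGroup n))
    (hP : P = SS x ∨ P = SSS x ∨ P = USS x ∨ P = RSSS x) :
    (∀ y ∈ P, InfClosed {a | a⁻¹ * y * a ∈ P}) ∧
    (∀ y ∈ P, ∀ S : Set (BraidGroup n), InfClosed S → BddBelow S →
      (S ∩ {a | a⁻¹ * y * a ∈ P}).Nonempty → ∃ a, IsLeast (S ∩ {a | a⁻¹ * y * a ∈ P}) a) := by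
  have hclosed : ∀ y ∈ P, InfClosed {a | a⁻¹ * y * a ∈ P} := by
    intro y hy
    cases subsingleton_or_nontrivial (BraidGroup n)
    · exact fun a _ b _ => Set.mem_ofPred.2 (by rwa [Subsingleton.elim (_ * _) y])
    · rcases hP with rfl | rfl | rfl | rfl
      exacts [infClosed_conj_SS x y, infClosed_conj_SSS x y, infClosed_conj_USS hy,
        infClosed_conj_RSSS hy]
  exact ⟨hclosed, fun y hy S hS hbdd hne => exists_isLeast_of_infClosed finite_Icc
    (hS.inter (hclosed y hy)) (hbdd.mono Set.inter_subset_left) hne⟩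

/-- convexity, Franco–González-Meneses, Gebhardt: each of the four
invariant subsets is closed under conjugating by the meet of two conjugators, and
each of its elements admits a unique minimal permutation-braid conjugator. -/
theorem convexity_of_invariant_sets (n : ℕ) (x : BraidGroup n)
    (P : Set (BraidGroup n))
    (hP : P = SS x ∨ P = SSS x ∨ P = USS x ∨ P = RSSS x) :
    (∀ y ∈ P, ∀ a b : BraidGroup n, IsPermBraid a → IsPermBraid b →
      a⁻¹ * y * a ∈ P → b⁻¹ * y * b ∈ P →
      (leftMeet a b)⁻¹ * y * leftMeet a b ∈ P) ∧
    (∀ y ∈ P, ∃! a : BraidGroup n, IsPermBraid a ∧ a⁻¹ * y * a ∈ P ∧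
      ∀ b : BraidGroup n, IsPermBraid b → b⁻¹ * y * b ∈ P → LeftDvd a b) := by
  obtain ⟨hclosed, hleast⟩ := convexity_of_invariant_sets_general n x P hP
  refine ⟨fun y hy a b ha hb hya hyb => leftMeet_eq_inf ha.1 hb.1 ▸ hclosed y hy hya hyb,
    fun y hy => ?_⟩
  obtain ⟨a, ⟨ha, hya⟩, hmin⟩ := hleast y hy (Set.Icc 1 (Δ n)) (infClosed_Icc 1 (Δ n))
    bddBelow_Icc ⟨1, ⟨le_rfl, isGarsideElement_Δ.one_le⟩, by simpa using hy⟩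
  simp only [isPermBraid_iff_mem_Icc]
  exact ⟨a, ⟨ha, hya, fun b hb hyb => hmin ⟨hb, hyb⟩⟩,
    fun b ⟨hb, hyb, hbmin⟩ => le_antisymm (hbmin a ha hya) (hmin ⟨hb, hyb⟩)⟩

end BraidGroup
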